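/- arXiv:1501.01690 — 2 statements merged into one kernel-verified Lean document; each statement's English description precedes it below -/
import Mathlib

section
/- Suppose a is an action of a group Γ on a Polish space X by Borel automorphisms which has a paradoxical decomposition (equivalently, by Tarski's theorem, is nonamenable). Then there is a free action of the free group F₂ on two generators on X by Baire measurable automorphisms which is a-Lipschitz. -/
open scoped Pointwise

/-- The families `A₁,…,Aₙ, B₁,…,B_m` together with group elements `α₁,…,αₙ, β₁,…,β_m` form a
paradoxical decomposition of the action of `Γ` on `X`. -/
def IsParadoxicalDecomposition {Γ X : Type*} [Group Γ] [MulAction Γ X]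
    {n m : ℕ} (A : Fin n → Set X) (B : Fin m → Set X) (α : Fin n → Γ) (β : Fin m → Γ) : Prop :=
  (∀ i j, i ≠ j → Disjoint (A i) (A j)) ∧
  (∀ i j, i ≠ j → Disjoint (B i) (B j)) ∧
  (∀ i j, Disjoint (A i) (B j)) ∧
  ((⋃ i, A i) ∪ (⋃ j, B j)) = Set.univ ∧
  (∀ i j, i ≠ j → Disjoint (α i • A i) (α j • A j)) ∧
  (∀ i j, i ≠ j → Disjoint (β i • B i) (β j • B j)) ∧
  (⋃ i, α i • A i) = Set.univ ∧
  (⋃ j, β j • B j) = Set.univ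

/-- A function between topological spaces (with Borel σ-algebras) is Baire measurable if the
preimage of every Borel set has the Baire property. -/
def BaireMeasurableFun {X Y : Type*} [TopologicalSpace X] [TopologicalSpace Y]
    [MeasurableSpace Y] (f : X → Y) : Prop :=
  ∀ s : Set Y, MeasurableSet s → BaireMeasurableSet (f ⁻¹' s)

/-!
A paradoxical decomposition gives two injections of `X` with disjoint images, each moving points by
finitely many group elements; composing them gives three, `k i`, and composing again nine. Hence,
for some finite `S ⊆ Γ`, every finite `F ⊆ X` satisfies `|S F| ≥ 6 |F|`, twice what Hall's theorem
needs to choose three points of `S x` for each `x` without repetitions.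

The surplus makes such a choice possible in a Borel way on a comeager set: at stage `n` it is made
on a Borel set `Aₙ` of points so far apart that a surplus by a factor `1 + 2⁻ⁿ` for large sets
shrinks at most to `1 + 2⁻⁽ⁿ⁺¹⁾`. A Baire category argument finds such `Aₙ` whose union contains an
invariant comeager Borel set `Y`. Off `Y` the maps `k i` are kept, however irregular. All further
constructions are measurable for the σ-algebra of sets whose trace on `Y` is Borel, and all its
members have the Baire property.

Three injections with disjoint images make `X` a disjoint union of components with at most one
cycle each. Two of the three children of each point can be chosen so as to break the cycles; this
creates roots. Reversing a ray of children from each root gives every point a parent, but makes each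
root have a single child, which is repaired by letting the ray skip every other point. The result
is a binary forest in which every point has a parent. Passing from parents to grandparents and
rerouting some edges makes each point have three children, hence four neighbors, with the edges
labelled by the generators of `F₂` so that each tree is a Cayley graph.
-/

section Matchings

open Finset
open scoped Classical

variable {V Y ι : Type*} {N : V → Finset Y} {k n : ℕ} {U : Set Y} {Z W : Set V} {w : V}
  {F : Finset V} {y : V → ι → Y}

/-- The vertices outside `U` adjacent to a vertex of `F`, in the bipartite graph on `V` and `Y` in
which `x : V` is adjacent to the elements of `N x`. -/
noncomputable def freeNeighbors (N : V → Finset Y) (U : Set Y) (F : Finset V) : Finset Y :=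
  {z ∈ F.biUnion N | z ∉ U}

/-- Hall's condition for assigning to each vertex of `Z` a set of `k` neighbors outside `U`, the
sets assigned to distinct vertices being disjoint. -/
def HallCondition (N : V → Finset Y) (k : ℕ) (U : Set Y) (Z : Set V) : Prop :=
  ∀ F : Finset V, ↑F ⊆ Z → k * #F ≤ #(freeNeighbors N U F)

/-- The points `φ x i`, for `x ∈ Z` and `i : ι`, are distinct neighbors of the vertices `x` lying
outside `U`. -/
structure IsMatching (N : V → Finset Y) (U : Set Y) (Z : Set V) (φ : V → ι → Y) : Prop where
  mem_neighbors : ∀ x ∈ Z, ∀ i, φ x i ∈ N x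
  notMem : ∀ x ∈ Z, ∀ i, φ x i ∉ U
  inj : ∀ x ∈ Z, ∀ x' ∈ Z, ∀ i i', φ x i = φ x' i' → x = x' ∧ i = i'

theorem mem_freeNeighbors {z : Y} : z ∈ freeNeighbors N U F ↔ (∃ x ∈ F, z ∈ N x) ∧ z ∉ U := by
  simp only [freeNeighbors, mem_filter, mem_biUnion]

theorem HallCondition.exists_isMatching [Fintype ι] [Nonempty Y]
    (h : HallCondition N (Fintype.card ι) U Z) : ∃ φ : V → ι → Y, IsMatching N U Z φ := by
  have hall (s : Finset (Z × ι)) : #s ≤ #(s.biUnion fun p => freeNeighbors N U {p.1.1}) := by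
    have hF := h ((s.image Prod.fst).map (.subtype _)) (by simp)
    calc #s ≤ #(s.image Prod.fst ×ˢ (univ : Finset ι)) :=
          card_le_card fun p hp => mem_product.2 ⟨mem_image_of_mem _ hp, mem_univ _⟩
      _ = Fintype.card ι * #((s.image Prod.fst).map (.subtype _)) := by
          rw [card_product, card_map, card_univ, mul_comm]
      _ ≤ #(freeNeighbors N U ((s.image Prod.fst).map (.subtype _))) := hF
      _ ≤ _ := card_le_card fun z hz => by
          obtain ⟨⟨x, hx, hzx⟩, hzU⟩ := mem_freeNeighbors.1 hz
          obtain ⟨q, hq, rfl⟩ := mem_map.1 hx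
          obtain ⟨p, hp, rfl⟩ := mem_image.1 hq
          exact mem_biUnion.2 ⟨p, hp, mem_freeNeighbors.2 ⟨⟨_, mem_singleton_self _, hzx⟩, hzU⟩⟩
  obtain ⟨f, hf, hfN⟩ := (all_card_le_biUnion_card_iff_exists_injective _).1 hall
  have hfN' (p : Z × ι) : f p ∈ N p.1 ∧ f p ∉ U := by
    simpa only [mem_freeNeighbors, mem_singleton, exists_eq_left] using hfN p
  refine ⟨fun x i => if hx : x ∈ Z then f (⟨x, hx⟩, i) else Classical.arbitrary Y, ?_, ?_, ?_⟩
  · intro x hx i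
    simpa only [dif_pos hx] using (hfN' (⟨x, hx⟩, i)).1
  · intro x hx i
    simpa only [dif_pos hx] using (hfN' (⟨x, hx⟩, i)).2
  · intro x hx x' hx' i i' heq
    simp only [dif_pos hx, dif_pos hx'] at heq
    simpa only [Prod.mk.injEq, Subtype.mk.injEq] using hf heq

theorem IsMatching.congr {φ φ' : V → ι → Y} (h : IsMatching N U Z φ) (hφ : Set.EqOn φ φ' Z) :
    IsMatching N U Z φ' where
  mem_neighbors x hx := hφ hx ▸ h.mem_neighbors x hx
  notMem x hx := hφ hx ▸ h.notMem x hx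
  inj x hx x' hx' := by
    rw [← hφ hx, ← hφ hx']
    exact h.inj x hx x' hx'

theorem IsMatching.mono {Z' : Set V} {φ : V → ι → Y} (h : IsMatching N U Z φ) (hZ : Z' ⊆ Z) :
    IsMatching N U Z' φ where
  mem_neighbors x hx := h.mem_neighbors x (hZ hx)
  notMem x hx := h.notMem x (hZ hx)
  inj x hx x' hx' := h.inj x (hZ hx) x' (hZ hx')

theorem IsMatching.iUnion {Z : ℕ → Set V} {φ : V → ι → Y} (hZ : Monotone Z)
    (h : ∀ n, IsMatching N U (Z n) φ) : IsMatching N U (⋃ n, Z n) φ where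
  mem_neighbors x hx := (Set.mem_iUnion.1 hx).elim fun n => (h n).mem_neighbors x
  notMem x hx := (Set.mem_iUnion.1 hx).elim fun n => (h n).notMem x
  inj x hx x' hx' := by
    obtain ⟨m, hm⟩ := Set.mem_iUnion.1 hx
    obtain ⟨n, hn⟩ := Set.mem_iUnion.1 hx'
    exact (h (max m n)).inj x (hZ (le_max_left m n) hm) x' (hZ (le_max_right m n) hn)

theorem IsMatching.hallCondition [Fintype ι] {φ : V → ι → Y} (h : IsMatching N U Z φ) :
    HallCondition N (Fintype.card ι) U Z := by
  intro F hF
  rw [mul_comm, ← card_univ, ← card_product]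
  refine card_le_card_of_injOn (fun p => φ p.1 p.2) (fun p hp => ?_) fun p hp q hq hpq => ?_
  · have hp1 : p.1 ∈ F := (mem_product.1 hp).1
    exact mem_freeNeighbors.2 ⟨⟨p.1, hp1, h.mem_neighbors _ (hF hp1) _⟩, h.notMem _ (hF hp1) _⟩
  · exact Prod.ext_iff.2 (h.inj _ (hF (mem_product.1 hp).1) _ (hF (mem_product.1 hq).1) _ _ hpq)

theorem IsMatching.diff_singleton {φ : V → ι → Y} (h : IsMatching N U Z φ) (hw : w ∈ Z) :
    IsMatching N (U ∪ Set.range (φ w)) (Z \ {w}) φ where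
  mem_neighbors x hx := h.mem_neighbors x hx.1
  notMem := by
    rintro x ⟨hxZ, hxw⟩ i (hU | ⟨j, hj⟩)
    · exact h.notMem x hxZ i hU
    · exact hxw (h.inj w hw x hxZ j i hj).1.symm
  inj x hx x' hx' := h.inj x hx.1 x' hx'.1

theorem HallCondition.mono {Z' : Set V} (h : HallCondition N k U Z) (hZ : Z' ⊆ Z) :
    HallCondition N k U Z' :=
  fun F hF => h F (hF.trans hZ)

/-- `ψ` is an admissible first choice of the neighbors matched to `w`: Hall's condition survives
the removal of `w` and of the points `ψ i`. -/
structure IsChoice [Fintype ι] (N : V → Finset Y) (U : Set Y) (Z : Set V) (w : V) (ψ : ι → Y) :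
    Prop where
  injective : ψ.Injective
  mem_neighbors : ∀ i, ψ i ∈ N w
  notMem : ∀ i, ψ i ∉ U
  hall : HallCondition N (Fintype.card ι) (U ∪ Set.range ψ) (Z \ {w})

theorem HallCondition.exists_isChoice [Fintype ι] [Nonempty Y]
    (h : HallCondition N (Fintype.card ι) U Z) (hw : w ∈ Z) : ∃ ψ : ι → Y, IsChoice N U Z w ψ := by
  obtain ⟨φ, hφ⟩ := h.exists_isMatching
  exact ⟨φ w, fun i j hij => (hφ.inj w hw w hw i j hij).2, hφ.mem_neighbors w hw, hφ.notMem w hw,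
    (hφ.diff_singleton hw).hallCondition⟩

/-- `F` is connected in the graph on `V` joining `x` and `y` whenever they have a common
neighbor. -/
def IsLinked (N : V → Finset Y) (F : Finset V) : Prop :=
  ∀ F' ⊂ F, F'.Nonempty → ∃ x ∈ F', ∃ y ∈ F \ F', ¬Disjoint (N x) (N y)

/-- The ball around `w` for the graph on `V` joining two vertices with a common neighbor. -/
def linkBall (N : V → Finset Y) (w : V) : ℕ → Set V
  | 0 => {w}
  | r + 1 => linkBall N w r ∪ {y | ∃ x ∈ linkBall N w r, ¬Disjoint (N x) (N y)}

theorem monotone_linkBall (N : V → Finset Y) (w : V) : Monotone (linkBall N w) :=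
  monotone_nat_of_le_succ fun _ => Set.subset_union_left

theorem mem_linkBall_one {x : V} (h : ¬Disjoint (N w) (N x)) : x ∈ linkBall N w 1 :=
  Or.inr ⟨w, rfl, h⟩

theorem IsLinked.le_card_inter_linkBall_or_subset (hF : IsLinked N F)
    (hne : {x ∈ F | x ∈ linkBall N w 1}.Nonempty) (m : ℕ) :
    m ≤ #{x ∈ F | x ∈ linkBall N w m} ∨ ↑F ⊆ linkBall N w m := by
  induction m with
  | zero => exact Or.inl (Nat.zero_le _)
  | succ m ih =>
    rcases m.eq_zero_or_pos with rfl | hm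
    · exact Or.inl hne.card_pos
    have hmono := monotone_linkBall N w m.le_succ
    by_cases hsub : ↑F ⊆ linkBall N w m
    · exact Or.inr (hsub.trans hmono)
    have hcard : m ≤ #{x ∈ F | x ∈ linkBall N w m} := ih.resolve_right hsub
    have hproper : {x ∈ F | x ∈ linkBall N w m} ⊂ F :=
      (filter_subset _ _).ssubset_of_ne fun h => hsub fun x hx => (filter_eq_self.1 h) x hx
    obtain ⟨x, hx, y, hy, hxy⟩ := hF _ hproper (card_pos.1 (hm.trans_le hcard))
    refine Or.inl (Nat.succ_le_of_lt (hcard.trans_lt (card_lt_card ?_)))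
    refine (ssubset_iff_of_subset (monotone_filter_right _ fun x _ hx => hmono hx)).2 ⟨y, ?_, ?_⟩
    · exact mem_filter.2 ⟨(mem_sdiff.1 hy).1, Or.inr ⟨x, (mem_filter.1 hx).2, hxy⟩⟩
    · exact (mem_sdiff.1 hy).2

theorem card_freeNeighbors_add_card_freeNeighbors_sdiff {F' : Finset V} (hsub : F' ⊆ F)
    (hdisj : ∀ x ∈ F', ∀ y ∈ F \ F', Disjoint (N x) (N y)) :
    #(freeNeighbors N U F') + #(freeNeighbors N U (F \ F')) = #(freeNeighbors N U F) := by
  rw [freeNeighbors, freeNeighbors, ← card_union_of_disjoint, ← filter_union, ← union_biUnion,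
    union_sdiff_of_subset hsub, freeNeighbors]
  refine disjoint_filter_filter ?_
  exact (disjoint_biUnion_left _ _ _).2 fun x hx =>
    (disjoint_biUnion_right _ _ _).2 fun y hy => hdisj x hx y hy

theorem HallCondition.of_isLinked
    (h : ∀ F : Finset V, ↑F ⊆ Z → IsLinked N F → k * #F ≤ #(freeNeighbors N U F)) :
    HallCondition N k U Z := by
  intro F
  induction F using Finset.strongInduction with
  | H F ih =>
    intro hF
    by_cases hlink : IsLinked N F
    · exact h F hF hlink
    simp only [IsLinked, not_forall, not_exists, not_and, not_not] at hlink
    obtain ⟨F', hF', hne, hdisj⟩ := hlink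
    calc k * #F = k * #F' + k * #(F \ F') := by
          rw [← mul_add, add_comm, card_sdiff_add_card_eq_card hF'.1]
      _ ≤ #(freeNeighbors N U F') + #(freeNeighbors N U (F \ F')) :=
          Nat.add_le_add (ih F' hF' fun x hx => hF (hF'.1 hx))
            (ih _ (sdiff_ssubset hF'.1 hne) fun x hx => hF (sdiff_subset hx))
      _ = #(freeNeighbors N U F) := card_freeNeighbors_add_card_freeNeighbors_sdiff hF'.1 hdisj

/-- The invariant of the Borel matching construction: Hall's condition, together with a surplus of
neighbors, by a factor `1 + 2⁻ⁿ`, for linked sets with at least `2ⁿ` elements. -/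
structure ExpandingHall (N : V → Finset Y) (k n : ℕ) (U : Set Y) (Z : Set V) : Prop where
  hall : HallCondition N k U Z
  expand : ∀ F : Finset V, ↑F ⊆ Z → IsLinked N F → 2 ^ n ≤ #F →
    k * (2 ^ n + 1) * #F ≤ 2 ^ n * #(freeNeighbors N U F)

theorem expandingHall_zero (h : ∀ F : Finset V, 2 * k * #F ≤ #(F.biUnion N)) :
    ExpandingHall N k 0 ∅ Set.univ := by
  have hfree (F : Finset V) : freeNeighbors N ∅ F = F.biUnion N := by
    ext z
    simp only [mem_freeNeighbors, mem_biUnion, Set.mem_empty_iff_false, not_false_eq_true, and_true]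
  refine ⟨fun F _ => ?_, fun F _ _ _ => ?_⟩
  · rw [hfree]
    nlinarith [h F]
  · rw [hfree]
    linarith [h F]

theorem mem_freeNeighbors_union_or_exists {z : Y} (hz : z ∈ freeNeighbors N U F) :
    z ∈ freeNeighbors N (U ∪ ⋃ w ∈ W, Set.range (y w)) F ∨ ∃ w ∈ W, ∃ i, y w i = z := by
  obtain ⟨hzN, hzU⟩ := mem_freeNeighbors.1 hz
  rw [or_iff_not_imp_right]
  refine fun hzW => mem_freeNeighbors.2 ⟨hzN, ?_⟩
  simpa only [Set.mem_union, Set.mem_iUnion, Set.mem_range, exists_prop, not_or] using ⟨hzU, hzW⟩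

theorem exists_finset_card_freeNeighbors_le [Fintype ι] (W : Set V) (y : V → ι → Y) (F : Finset V) :
    ∃ T : Finset V, ↑T ⊆ W ∧ (∀ w ∈ T, ∃ i, y w i ∈ freeNeighbors N U F) ∧
      #(freeNeighbors N U F) ≤
        #(freeNeighbors N (U ∪ ⋃ w ∈ W, Set.range (y w)) F) + Fintype.card ι * #T := by
  set U' := U ∪ ⋃ w ∈ W, Set.range (y w)
  have hex : ∀ z ∈ freeNeighbors N U F \ freeNeighbors N U' F, ∃ w ∈ W, ∃ i, y w i = z :=
    fun z hz => (mem_freeNeighbors_union_or_exists (mem_sdiff.1 hz).1).resolve_left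
      (mem_sdiff.1 hz).2
  choose f hfW hf using hex
  set T := (freeNeighbors N U F \ freeNeighbors N U' F).attach.image fun z => f z.1 z.2
  refine ⟨T, ?_, ?_, ?_⟩
  · intro w hw
    obtain ⟨z, -, rfl⟩ := mem_image.1 hw
    exact hfW z.1 z.2
  · intro w hw
    obtain ⟨z, -, rfl⟩ := mem_image.1 hw
    obtain ⟨i, hi⟩ := hf z.1 z.2
    exact ⟨i, hi.symm ▸ (mem_sdiff.1 z.2).1⟩
  have hcover : freeNeighbors N U F \ freeNeighbors N U' F ⊆
      T.biUnion fun w => univ.image (y w) := fun z hz =>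
    mem_biUnion.2 ⟨f z hz, mem_image_of_mem _ (mem_attach _ ⟨z, hz⟩),
      mem_image_univ_iff_mem_range.2 (hf z hz)⟩
  calc #(freeNeighbors N U F)
      ≤ #(freeNeighbors N U' F) + #(freeNeighbors N U F \ freeNeighbors N U' F) := by
        rw [add_comm]; exact card_le_card_sdiff_add_card
    _ ≤ #(freeNeighbors N U' F) + Fintype.card ι * #T := by
        gcongr
        rw [mul_comm]
        exact (card_le_card hcover).trans
          (card_biUnion_le_card_mul _ _ _ fun w _ => card_image_le)

theorem filter_mem_linkBall_one_nonempty (hy : ∀ i, y w i ∈ N w)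
    (hw : ∃ i, y w i ∈ freeNeighbors N U F) : {x ∈ F | x ∈ linkBall N w 1}.Nonempty := by
  obtain ⟨i, hi⟩ := hw
  obtain ⟨⟨x, hx, hxi⟩, -⟩ := mem_freeNeighbors.1 hi
  exact ⟨x, mem_filter.2 ⟨hx, mem_linkBall_one (not_disjoint_iff.2 ⟨_, hy i, hxi⟩)⟩⟩

theorem mul_card_le_card_of_pairwiseDisjoint_linkBall {m r : ℕ} {T : Finset V}
    (hsep : W.PairwiseDisjoint fun w => linkBall N w r) (hT : ↑T ⊆ W)
    (hm : ∀ w ∈ T, m ≤ #{x ∈ F | x ∈ linkBall N w r}) : m * #T ≤ #F := by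
  calc m * #T ≤ ∑ w ∈ T, #{x ∈ F | x ∈ linkBall N w r} := by
        rw [mul_comm, ← smul_eq_mul]
        exact card_nsmul_le_sum _ _ _ hm
    _ = #(T.biUnion fun w => {x ∈ F | x ∈ linkBall N w r}) := by
        refine (card_biUnion fun w hw w' hw' hne => ?_).symm
        exact disjoint_filter.2 fun x _ hx hx' =>
          Set.disjoint_left.1 (hsep (hT hw) (hT hw') hne) hx hx'
    _ ≤ #F := card_le_card (biUnion_subset.2 fun w _ => filter_subset _ _)

theorem ExpandingHall.expand_diff [Fintype ι] (h : ExpandingHall N (Fintype.card ι) n U Z)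
    (hy : ∀ w ∈ W, ∀ i, y w i ∈ N w)
    (hsep : W.PairwiseDisjoint fun w => linkBall N w (2 ^ (n + 1)))
    (hF : ↑F ⊆ Z) (hlink : IsLinked N F) (hcard : 2 ^ (n + 1) ≤ #F) :
    Fintype.card ι * (2 ^ (n + 1) + 1) * #F ≤
      2 ^ (n + 1) * #(freeNeighbors N (U ∪ ⋃ w ∈ W, Set.range (y w)) F) := by
  obtain ⟨T, hTW, hT, hloss⟩ := exists_finset_card_freeNeighbors_le (N := N) (U := U) W y F
  have hTcard : 2 ^ (n + 1) * #T ≤ #F := by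
    refine mul_card_le_card_of_pairwiseDisjoint_linkBall hsep hTW fun w hw => ?_
    have hne := filter_mem_linkBall_one_nonempty (hy w (hTW hw)) (hT w hw)
    refine (hlink.le_card_inter_linkBall_or_subset hne _).elim id fun hsub => ?_
    rwa [filter_true_of_mem hsub]
  have hexp := h.expand F hF hlink (le_trans (Nat.pow_le_pow_right two_pos n.le_succ) hcard)
  have hlossMul := Nat.mul_le_mul_left (2 ^ n) hloss
  have hTcardMul := Nat.mul_le_mul_left (Fintype.card ι) hTcard
  rw [pow_succ] at hTcardMul ⊢
  linarith

/-- A linked set with fewer than `2ⁿ⁺¹` elements is affected by at most one of the removals. -/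
theorem ExpandingHall.hall_diff_of_card_lt [Fintype ι]
    (h : ExpandingHall N (Fintype.card ι) n U Z) (hy : ∀ w ∈ W, ∀ i, y w i ∈ N w)
    (hsep : W.PairwiseDisjoint fun w => linkBall N w (2 ^ (n + 1)))
    (hloc : ∀ w ∈ W, HallCondition N (Fintype.card ι) (U ∪ Set.range (y w))
      ((Z \ {w}) ∩ linkBall N w (2 ^ (n + 1))))
    (hF : ↑F ⊆ Z \ W) (hlink : IsLinked N F) (hcard : #F < 2 ^ (n + 1)) :
    Fintype.card ι * #F ≤ #(freeNeighbors N (U ∪ ⋃ w ∈ W, Set.range (y w)) F) := by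
  have htouch : ∀ w ∈ W, (∃ i, y w i ∈ freeNeighbors N U F) →
      ↑F ⊆ linkBall N w (2 ^ (n + 1)) := fun w hw hi =>
    (hlink.le_card_inter_linkBall_or_subset
      (filter_mem_linkBall_one_nonempty (hy w hw) hi) _).resolve_left
        ((card_filter_le _ _).trans_lt hcard).not_ge
  by_cases hW : ∃ w ∈ W, ∃ i, y w i ∈ freeNeighbors N U F
  · obtain ⟨w, hw, hi⟩ := hW
    have hFw : ↑F ⊆ (Z \ {w}) ∩ linkBall N w (2 ^ (n + 1)) := fun x hx =>
      ⟨⟨(hF hx).1, fun hxw => (hF hx).2 (Set.mem_singleton_iff.1 hxw ▸ hw)⟩, htouch w hw hi hx⟩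
    refine (hloc w hw F hFw).trans (card_le_card fun z hz => ?_)
    obtain ⟨hzN, hzU⟩ := mem_freeNeighbors.1 hz
    have hzfree : z ∈ freeNeighbors N U F := mem_freeNeighbors.2 ⟨hzN, fun hz' => hzU (Or.inl hz')⟩
    refine (mem_freeNeighbors_union_or_exists hzfree).resolve_right ?_
    rintro ⟨w', hw', j, rfl⟩
    obtain ⟨x, hx, -⟩ := hzN
    have hww' : w = w' :=
      hsep.elim_set hw hw' x (htouch w hw hi hx) (htouch w' hw' ⟨j, hzfree⟩ hx)
    exact hzU (Or.inr ⟨j, hww' ▸ rfl⟩)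
  · refine (h.hall F (hF.trans Set.sdiff_subset)).trans (card_le_card fun z hz => ?_)
    refine (mem_freeNeighbors_union_or_exists hz).resolve_right ?_
    rintro ⟨w, hw, i, rfl⟩
    exact hW ⟨w, hw, i, hz⟩

theorem ExpandingHall.diff [Fintype ι] (h : ExpandingHall N (Fintype.card ι) n U Z)
    (hy : ∀ w ∈ W, ∀ i, y w i ∈ N w)
    (hsep : W.PairwiseDisjoint fun w => linkBall N w (2 ^ (n + 1)))
    (hloc : ∀ w ∈ W, HallCondition N (Fintype.card ι) (U ∪ Set.range (y w))
      ((Z \ {w}) ∩ linkBall N w (2 ^ (n + 1)))) :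
    ExpandingHall N (Fintype.card ι) (n + 1) (U ∪ ⋃ w ∈ W, Set.range (y w)) (Z \ W) := by
  set U' := U ∪ ⋃ w ∈ W, Set.range (y w)
  have hexpand (F : Finset V) (hF : ↑F ⊆ Z \ W) := h.expand_diff hy hsep (hF.trans Set.sdiff_subset)
  refine ⟨HallCondition.of_isLinked fun F hF hlink => ?_, hexpand⟩
  rcases lt_or_ge #F (2 ^ (n + 1)) with hcard | hcard
  · exact h.hall_diff_of_card_lt hy hsep hloc hF hlink hcard
  · refine Nat.le_of_mul_le_mul_left ?_ (Nat.two_pow_pos (n + 1))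
    calc 2 ^ (n + 1) * (Fintype.card ι * #F)
        ≤ Fintype.card ι * (2 ^ (n + 1) + 1) * #F := by
          rw [← mul_assoc, mul_comm (2 ^ (n + 1))]
          gcongr
          exact Nat.le_succ _
      _ ≤ 2 ^ (n + 1) * #(freeNeighbors N U' F) := hexpand F hF hlink hcard

/-- A matching of the vertices of `D` that can still be extended, as the unmatched vertices satisfy
the expansion condition with respect to the unmatched points. -/
structure PartialMatching [Fintype ι] (N : V → Finset Y) (n : ℕ) (D : Set V) (φ : V → ι → Y) :
    Prop where
  isMatching : IsMatching N ∅ D φ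
  expandingHall : ExpandingHall N (Fintype.card ι) n (⋃ x ∈ D, Set.range (φ x)) Dᶜ

theorem partialMatching_empty [Fintype ι]
    (h : ∀ F : Finset V, 2 * Fintype.card ι * #F ≤ #(F.biUnion N)) (φ : V → ι → Y) :
    PartialMatching N 0 ∅ φ := by
  refine ⟨⟨fun _ h => h.elim, fun _ h => h.elim, fun _ h => h.elim⟩, ?_⟩
  rw [Set.biUnion_empty, Set.compl_empty]
  exact expandingHall_zero h

theorem mem_biUnion_range {D : Set V} {φ : V → ι → Y} {x : V} (hx : x ∈ D) (i : ι) :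
    φ x i ∈ ⋃ x ∈ D, Set.range (φ x) :=
  Set.mem_biUnion hx (Set.mem_range_self i)

theorem IsMatching.union {D : Set V} {φ : V → ι → Y} (hD : IsMatching N ∅ D φ)
    (hW : IsMatching N (⋃ x ∈ D, Set.range (φ x)) W φ) : IsMatching N ∅ (D ∪ W) φ where
  mem_neighbors x hx := hx.elim (hD.mem_neighbors x) (hW.mem_neighbors x)
  notMem _ _ _ := Set.notMem_empty _
  inj := by
    rintro x (hx | hx) x' (hx' | hx') i i' heq
    · exact hD.inj x hx x' hx' i i' heq
    · exact absurd (heq ▸ mem_biUnion_range hx i) (hW.notMem x' hx' i')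
    · exact absurd (heq ▸ mem_biUnion_range hx' i') (hW.notMem x hx i)
    · exact hW.inj x hx x' hx' i i' heq

theorem isMatching_of_isChoice [Fintype ι] {φ : V → ι → Y} {r : ℕ} {Z : V → Set V} (hr : 1 ≤ r)
    (hsep : W.PairwiseDisjoint fun w => linkBall N w r)
    (hW : ∀ w ∈ W, IsChoice N U (Z w) w (φ w)) : IsMatching N U W φ where
  mem_neighbors x hx := (hW x hx).mem_neighbors
  notMem x hx := (hW x hx).notMem
  inj x hx x' hx' i i' heq := by
    have hmeet : ¬Disjoint (N x) (N x') := not_disjoint_iff.2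
      ⟨φ x i, (hW x hx).mem_neighbors i, heq ▸ (hW x' hx').mem_neighbors i'⟩
    have hxx' : x = x' := hsep.elim_set hx hx' x'
      (monotone_linkBall N x hr (mem_linkBall_one hmeet))
      (monotone_linkBall N x' (Nat.zero_le r) rfl)
    subst hxx'
    exact ⟨rfl, (hW x hx).injective heq⟩

theorem PartialMatching.union [Fintype ι] {D A : Set V} {φ φ' : V → ι → Y} {B : V → Set V}
    (h : PartialMatching N n D φ) (hφ : Set.EqOn φ φ' D)
    (hsep : A.PairwiseDisjoint fun w => linkBall N w (2 ^ (n + 1)))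
    (hB : ∀ w, linkBall N w (2 ^ (n + 1)) ⊆ B w)
    (hchoice : ∀ w ∈ A \ D, IsChoice N (⋃ x ∈ D, Set.range (φ x)) (Dᶜ ∩ B w) w (φ' w)) :
    PartialMatching N (n + 1) (D ∪ A) φ' := by
  have hsepDiff := hsep.subset (Set.sdiff_subset (t := D))
  have hrange : ⋃ x ∈ D, Set.range (φ x) = ⋃ x ∈ D, Set.range (φ' x) :=
    Set.iUnion₂_congr fun x hx => congrArg Set.range (hφ hx)
  rw [← Set.union_sdiff_self]
  refine ⟨(h.isMatching.congr hφ).union ?_, ?_⟩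
  · exact hrange ▸ isMatching_of_isChoice Nat.one_le_two_pow hsepDiff hchoice
  · rw [Set.biUnion_union, ← hrange, Set.compl_union, ← Set.sdiff_eq]
    refine h.expandingHall.diff (fun w hw => (hchoice w hw).mem_neighbors) hsepDiff fun w hw => ?_
    refine (hchoice w hw).hall.mono fun x hx => ⟨⟨hx.1.1, hB w hx.2⟩, hx.1.2⟩

end Matchings

section BaireCategory

open TopologicalSpace

variable {Γ X κ : Type*} [TopologicalSpace X]

theorem mem_residual_of_forall_not_isMeagre_inter {b : Set (Set X)} (hb : IsTopologicalBasis b)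
    {E : Set X} (hE : BaireMeasurableSet E)
    (h : ∀ V ∈ b, V.Nonempty → ¬IsMeagre (V ∩ E)) : E ∈ residual X := by
  obtain ⟨O, hO, hEO⟩ := hE.compl.residualEq_isOpen
  have hempty : O = ∅ := by
    by_contra hne
    obtain ⟨x, hx⟩ := Set.nonempty_iff_ne_empty.2 hne
    obtain ⟨V, hV, hxV, hVO⟩ := hb.exists_subset_of_mem_open hx hO
    refine h V hV ⟨x, hxV⟩ ?_
    change _ ∈ residual X
    filter_upwards [hEO.mem_iff] with z hz
    exact fun hzVE => hz.2 (hVO hzVE.1) hzVE.2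
  filter_upwards [hEO.mem_iff] with z hz
  by_contra hzE
  exact (hempty ▸ hz.1 hzE : z ∈ (∅ : Set X))

theorem exists_forall_smul_mem_iUnion_mem_residual [BaireSpace X] [SecondCountableTopology X]
    [MeasurableSpace X] [BorelSpace X] [Nonempty X] [Monoid Γ] [Countable Γ] [MulAction Γ X]
    [MeasurableConstSMul Γ X] [Countable κ] {C : ℕ → κ → Set X}
    (hC : ∀ n v, MeasurableSet (C n v)) (hcover : ∀ n, ⋃ v, C n v = Set.univ) :
    ∃ v : ℕ → κ, {x : X | ∀ γ : Γ, γ • x ∈ ⋃ n, C n (v n)} ∈ residual X := by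
  have : Countable (countableBasis X) := (countable_countableBasis X).to_subtype
  have : Nonempty (countableBasis X) := by
    obtain ⟨V, hV, -⟩ := (isBasis_countableBasis X).exists_subset_of_mem_open
      (Set.mem_univ (Classical.arbitrary X)) isOpen_univ
    exact ⟨V, hV⟩
  obtain ⟨e, he⟩ := exists_surjective_nat (Γ × countableBasis X)
  have hnonmeagre (n : ℕ) :
      ∃ v, ¬IsMeagre ((e n).2.1 ∩ (fun x => (e n).1 • x) ⁻¹' C n v) := by
    by_contra! hmeagre
    refine not_isMeagre_of_isOpen (isOpen_of_mem_countableBasis (e n).2.2)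
      (nonempty_of_mem_countableBasis (e n).2.2) ((isMeagre_iUnion hmeagre).mono ?_)
    rw [← Set.inter_iUnion, ← Set.preimage_iUnion, hcover, Set.preimage_univ, Set.inter_univ]
  choose v hv using hnonmeagre
  refine ⟨v, ?_⟩
  rw [Set.ofPred_forall, countable_iInter_mem]
  intro γ
  have hmeas : MeasurableSet {x : X | γ • x ∈ ⋃ n, C n (v n)} :=
    measurable_const_smul γ (MeasurableSet.iUnion fun n => hC n (v n))
  refine mem_residual_of_forall_not_isMeagre_inter (isBasis_countableBasis X)
    hmeas.baireMeasurableSet fun V hV _ hmeagre => ?_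
  obtain ⟨n, hn⟩ := he (γ, ⟨V, hV⟩)
  refine hv n (hmeagre.mono ?_)
  rw [hn]
  exact Set.inter_subset_inter_right _ fun x hx => Set.mem_iUnion.2 ⟨n, hx⟩

/-- No element of `R` maps a point of `A` to another point of `A`. -/
def IsSMulSeparated [SMul Γ X] (R : Finset Γ) (A : Set X) : Prop :=
  ∀ x ∈ A, ∀ γ ∈ R, γ • x ∈ A → γ • x = x

theorem exists_mem_basis_forall_smul_eq [T1Space X] [SMul Γ X] (R : Finset Γ)
    {b : Set (Set X)} (hb : IsTopologicalBasis b) (x : X) :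
    ∃ V ∈ b, x ∈ V ∧ ∀ γ ∈ R, γ • x ∈ V → γ • x = x := by
  have hfin : ((fun γ : Γ => γ • x) '' R \ {x}).Finite := (R.finite_toSet.image _).sdiff
  obtain ⟨V, hV, hxV, hVsub⟩ := hb.exists_subset_of_mem_open
    (show x ∈ ((fun γ : Γ => γ • x) '' R \ {x})ᶜ from fun hx => hx.2 rfl) hfin.isClosed.isOpen_compl
  refine ⟨V, hV, hxV, fun γ hγ hγV => ?_⟩
  by_contra hne
  exact hVsub hγV ⟨⟨γ, hγ, rfl⟩, hne⟩

theorem exists_isSMulSeparated_seq [T2Space X] [BaireSpace X] [SecondCountableTopology X]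
    [MeasurableSpace X] [BorelSpace X] [Monoid Γ] [Countable Γ] [MulAction Γ X]
    [MeasurableConstSMul Γ X] (R : ℕ → Finset Γ) :
    ∃ A : ℕ → Set X, (∀ n, MeasurableSet (A n)) ∧ (∀ n, IsSMulSeparated (R n) (A n)) ∧
      {x : X | ∀ γ : Γ, γ • x ∈ ⋃ n, A n} ∈ residual X := by
  cases isEmpty_or_nonempty X
  · exact ⟨fun _ => ∅, fun _ => .empty, fun _ x => isEmptyElim x, Filter.univ_mem' isEmptyElim⟩
  have : Countable (countableBasis X) := (countable_countableBasis X).to_subtype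
  let C (n : ℕ) (V : countableBasis X) : Set X :=
    V.1 ∩ ⋂ γ ∈ R n, {x | γ • x ∈ V.1 → γ • x = x}
  have hCmeas n V : MeasurableSet (C n V) := by
    have hV : MeasurableSet V.1 := (isOpen_of_mem_countableBasis V.2).measurableSet
    refine hV.inter ((R n).measurableSet_biInter fun γ _ => ?_)
    exact .imp (measurable_const_smul γ hV)
      (measurableSet_eq_fun (measurable_const_smul γ) measurable_id)
  have hCcover n : ⋃ V, C n V = Set.univ := by
    refine Set.eq_univ_of_forall fun x => ?_
    obtain ⟨V, hV, hxV, hsep⟩ := exists_mem_basis_forall_smul_eq (R n) (isBasis_countableBasis X) x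
    exact Set.mem_iUnion.2 ⟨⟨V, hV⟩, hxV, Set.mem_iInter₂.2 hsep⟩
  obtain ⟨v, hv⟩ := exists_forall_smul_mem_iUnion_mem_residual (Γ := Γ) hCmeas hCcover
  exact ⟨fun n => C n (v n), fun n => hCmeas n (v n),
    fun n x hx γ hγ hγx => Set.mem_iInter₂.1 hx.2 γ hγ hγx.1, hv⟩

end BaireCategory

section OrbitMatchings

open Finset MulAction
open scoped Classical

variable {Γ X ι : Type*} [Group Γ] [MulAction Γ X] {S T : Finset Γ} {U Z D A : Set X} {w : X}
  {k n : ℕ}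

/-- The image of `x` under `S`, as the neighborhood of `x` in a bipartite graph on two copies of
`X`. -/
noncomputable def orbitNeighbors (S : Finset Γ) (x : X) : Finset X :=
  S.image (· • x)

theorem linkBall_orbitNeighbors_subset (S : Finset Γ) (w : X) (r : ℕ) :
    linkBall (orbitNeighbors S) w r ⊆ (· • w) '' ((insert 1 (S⁻¹ * S) ^ r : Finset Γ) : Set Γ) := by
  induction r with
  | zero => rintro x rfl; exact ⟨1, by simp only [pow_zero, coe_one, Set.mem_one], one_smul _ _⟩
  | succ r ih =>
    rintro y (hy | ⟨x, hx, hxy⟩)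
    · obtain ⟨γ, hγ, rfl⟩ := ih hy
      exact ⟨γ, pow_subset_pow_right (mem_insert_self _ _) r.le_succ hγ, rfl⟩
    · obtain ⟨γ, hγ, rfl⟩ := ih hx
      obtain ⟨z, hzx, hzy⟩ := not_disjoint_iff.1 hxy
      obtain ⟨s, hs, rfl⟩ := mem_image.1 hzx
      obtain ⟨t, ht, heq⟩ := mem_image.1 hzy
      refine ⟨t⁻¹ * s * γ, ?_, ?_⟩
      · rw [pow_succ']
        exact mul_mem_mul (mem_insert_of_mem (mul_mem_mul (inv_mem_inv ht) hs)) hγ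
      · simp only [mul_smul]
        exact inv_smul_eq_iff.2 heq.symm

theorem linkBall_orbitNeighbors_subset_orbit (S : Finset Γ) (w : X) (r : ℕ) :
    linkBall (orbitNeighbors S) w r ⊆ orbit Γ w :=
  (linkBall_orbitNeighbors_subset S w r).trans (Set.image_subset_range _ _)

theorem IsSMulSeparated.pairwiseDisjoint_linkBall {r : ℕ}
    (hA : IsSMulSeparated ((insert 1 (S⁻¹ * S) ^ r)⁻¹ * insert 1 (S⁻¹ * S) ^ r) A) :
    A.PairwiseDisjoint fun w => linkBall (orbitNeighbors S) w r := by
  intro w hw w' hw' hne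
  refine Set.disjoint_left.2 fun x hx hx' => hne ?_
  obtain ⟨γ, hγ, rfl⟩ := linkBall_orbitNeighbors_subset S w r hx
  obtain ⟨δ, hδ, heq⟩ := linkBall_orbitNeighbors_subset S w' r hx'
  have hw'w : (δ⁻¹ * γ) • w = w' := by
    rw [mul_smul]
    exact inv_smul_eq_iff.2 heq.symm
  rw [← hw'w, hA w hw _ (mul_mem_mul (inv_mem_inv hδ) hγ) (hw'w.symm ▸ hw')]

theorem freeNeighbors_orbitNeighbors_image_smul :
    freeNeighbors (orbitNeighbors S) U (T.image (· • w)) =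
      {x ∈ (S * T).image (· • w) | x ∉ U} := by
  ext x
  simp only [mem_freeNeighbors, orbitNeighbors, mem_image, mem_filter, mem_mul]
  refine and_congr_left fun _ => ⟨?_, ?_⟩
  · rintro ⟨_, ⟨γ, hγ, rfl⟩, s, hs, rfl⟩
    exact ⟨s * γ, ⟨s, hs, γ, hγ, rfl⟩, mul_smul _ _ _⟩
  · rintro ⟨_, ⟨s, hs, γ, hγ, rfl⟩, rfl⟩
    exact ⟨_, ⟨γ, hγ, rfl⟩, s, hs, (mul_smul _ _ _).symm⟩

theorem le_card_freeNeighbors_image_smul_iff {m : ℕ} :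
    m ≤ #(freeNeighbors (orbitNeighbors S) U (T.image (· • w))) ↔
      ∃ T' ⊆ S * T, Set.InjOn (· • w) (T' : Set Γ) ∧ (∀ γ ∈ T', γ • w ∉ U) ∧ m ≤ #T' := by
  rw [freeNeighbors_orbitNeighbors_image_smul]
  constructor
  · intro h
    have hsurj : Set.SurjOn (· • w) ((S * T : Finset Γ) : Set Γ)
        ({x ∈ (S * T).image (· • w) | x ∉ U} : Finset X) := fun x hx => by
      obtain ⟨γ, hγ, rfl⟩ := mem_image.1 (mem_filter.1 hx).1
      exact ⟨γ, hγ, rfl⟩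
    obtain ⟨T', hT', hinj, himage⟩ := exists_subset_injOn_image_eq_of_surjOn _ _ hsurj
    refine ⟨T', coe_subset.1 hT', hinj, fun γ hγ => ?_, ?_⟩
    · exact (mem_filter.1 (himage.subset (mem_image_of_mem _ hγ))).2
    · rwa [← card_image_of_injOn hinj, himage]
  · rintro ⟨T', hT', hinj, hU, hm⟩
    rw [← card_image_of_injOn hinj] at hm
    refine hm.trans (card_le_card fun x hx => ?_)
    obtain ⟨γ, hγ, rfl⟩ := mem_image.1 hx
    exact mem_filter.2 ⟨mem_image_of_mem _ (hT' hγ), hU γ hγ⟩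

/-- Restricted to one orbit, Hall's condition only involves quantifiers over the finite subsets of
the group; this makes it a Borel condition on the orbit when the group is countable. -/
theorem hallCondition_inter_orbit_iff :
    HallCondition (orbitNeighbors S) k U (Z ∩ orbit Γ w) ↔
      ∀ T : Finset Γ, Set.InjOn (· • w) (T : Set Γ) → (∀ γ ∈ T, γ • w ∈ Z) →
        ∃ T' ⊆ S * T, Set.InjOn (· • w) (T' : Set Γ) ∧ (∀ γ ∈ T', γ • w ∉ U) ∧
          k * #T ≤ #T' := by
  simp only [← le_card_freeNeighbors_image_smul_iff]
  constructor
  · intro h T hinj hT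
    rw [← card_image_of_injOn hinj]
    refine h _ fun x hx => ?_
    obtain ⟨γ, hγ, rfl⟩ := mem_image.1 hx
    exact ⟨hT γ hγ, mem_orbit _ _⟩
  · intro h F hF
    obtain ⟨T, -, hinj, rfl⟩ := exists_subset_injOn_image_eq_of_surjOn
      (f := fun γ : Γ => γ • w) Set.univ F fun x hx => by
        obtain ⟨γ, rfl⟩ := (hF hx).2
        exact ⟨γ, trivial, rfl⟩
    rw [card_image_of_injOn hinj]
    exact h T hinj fun γ hγ => (hF (mem_image_of_mem _ hγ)).1

variable [MeasurableSpace X] [MeasurableEq X] [MeasurableConstSMul Γ X]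

theorem measurable_hallCondition_inter_orbit [Countable Γ] (S : Finset Γ) (k : ℕ)
    {U Z : X → Set X} (hU : ∀ γ : Γ, Measurable fun w => γ • w ∈ U w)
    (hZ : ∀ γ : Γ, Measurable fun w => γ • w ∈ Z w) :
    Measurable fun w => HallCondition (orbitNeighbors S) k (U w) (Z w ∩ orbit Γ w) := by
  have hinj (T : Finset Γ) : Measurable fun w : X => Set.InjOn (· • w) (T : Set Γ) :=
    .forall fun γ => measurable_const.imp <| .forall fun δ => measurable_const.imp <|
      ((measurable_const_smul γ).eq (measurable_const_smul δ)).imp measurable_const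
  simp only [hallCondition_inter_orbit_iff]
  refine .forall fun T => (hinj T).imp <| .imp (.forall fun γ => measurable_const.imp (hZ γ)) ?_
  refine .exists fun T' => measurable_const.and <| (hinj T').and <| .and ?_ measurable_const
  exact .forall fun γ => measurable_const.imp (hU γ).not

theorem measurableSet_setOf_isChoice [Fintype ι] [Countable Γ] (S : Finset Γ)
    (hU : MeasurableSet U) (hZ : MeasurableSet Z) (c : ι → Γ) :
    MeasurableSet {w : X | IsChoice (orbitNeighbors S) U (Z ∩ orbit Γ w) w fun i => c i • w} := by
  have hsmul (γ : Γ) {B : Set X} (hB : MeasurableSet B) : Measurable fun w : X => γ • w ∈ B :=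
    measurableSet_setOfPred.1 (measurable_const_smul γ hB)
  have heq (γ δ : Γ) : Measurable fun w : X => γ • w = δ • w :=
    (measurable_const_smul γ).eq (measurable_const_smul δ)
  have hiff (w : X) : IsChoice (orbitNeighbors S) U (Z ∩ orbit Γ w) w (fun i => c i • w) ↔
      (∀ i j, c i • w = c j • w → i = j) ∧ (∀ i, ∃ s, s ∈ S ∧ s • w = c i • w) ∧
        (∀ i, c i • w ∉ U) ∧ HallCondition (orbitNeighbors S) (Fintype.card ι)
          (U ∪ Set.range fun i => c i • w) ((Z \ {w}) ∩ orbit Γ w) := by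
    rw [← Set.inter_sdiff_right_comm]
    exact ⟨fun h => ⟨h.injective, fun i => mem_image.1 (h.mem_neighbors i), h.notMem, h.hall⟩,
      fun h => ⟨h.1, fun i => mem_image.2 (h.2.1 i), h.2.2.1, h.2.2.2⟩⟩
  simp only [hiff]
  refine measurableSet_setOfPred.2 <| .and ?_ <| .and ?_ <| .and ?_ ?_
  · exact .forall fun i => .forall fun j => (heq _ _).imp measurable_const
  · exact .forall fun i => .exists fun s => measurable_const.and (heq _ _)
  · exact .forall fun i => (hsmul _ hU).not
  · refine measurable_hallCondition_inter_orbit S _ (fun γ => ?_) fun γ => ?_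
    · exact (hsmul γ hU).or (.exists fun i => heq (c i) γ)
    · exact (hsmul γ hZ).and ((measurable_const_smul γ).eq measurable_id).not

theorem exists_measurable_forall_mem_eq {X Y κ : Type*} [MeasurableSpace X] [MeasurableSpace Y]
    [Countable κ] [Nonempty κ] {P : κ → Set X} {g : κ → X → Y} (hP : ∀ c, MeasurableSet (P c))
    (hg : ∀ c, Measurable (g c)) :
    ∃ f : X → Y, Measurable f ∧ ∀ x ∈ ⋃ c, P c, ∃ c, x ∈ P c ∧ f x = g c x := by
  obtain ⟨e, he⟩ := exists_surjective_nat κ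
  obtain ⟨f, hf, hfeq⟩ := exists_measurable_piecewise (disjointed (P ∘ e))
    (.disjointed fun n => hP (e n)) (fun n => g (e n)) (fun n => hg (e n)) fun m n hmn x hx =>
      (Set.disjoint_left.1 (disjoint_disjointed _ hmn) hx.1 hx.2).elim
  refine ⟨f, hf, fun x hx => ?_⟩
  rw [← he.iUnion_comp, ← Function.comp_def, ← iUnion_disjointed] at hx
  obtain ⟨n, hn⟩ := Set.mem_iUnion.1 hx
  exact ⟨e n, disjointed_subset _ n hn, hfeq n hn⟩

theorem measurableSet_image_of_mem_orbit [Countable Γ] {s : Set X} {f : X → X}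
    (hs : MeasurableSet s) (hf : Measurable f) (hfs : ∀ x ∈ s, f x ∈ orbit Γ x) :
    MeasurableSet (f '' s) := by
  have himage : f '' s = ⋃ γ : Γ, (fun x => γ⁻¹ • x) ⁻¹' (s ∩ {x | f x = γ • x}) := by
    ext y
    simp only [Set.mem_iUnion]
    constructor
    · rintro ⟨x, hx, rfl⟩
      obtain ⟨γ, hγ : γ • x = f x⟩ := hfs x hx
      refine ⟨γ, ?_⟩
      rw [← hγ, Set.mem_preimage, inv_smul_smul]
      exact ⟨hx, hγ.symm⟩
    · rintro ⟨γ, hγs, hγ⟩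
      exact ⟨γ⁻¹ • y, hγs, hγ.trans (smul_inv_smul γ y)⟩
  rw [himage]
  exact .iUnion fun γ => measurable_const_smul γ⁻¹
    (hs.inter (measurableSet_eq_fun hf (measurable_const_smul γ)))

theorem PartialMatching.exists_union [Fintype ι] [Countable Γ] {φ : X → ι → X}
    (h : PartialMatching (orbitNeighbors S) n D φ) (hφ : Measurable φ) (hD : MeasurableSet D)
    (hA : IsSMulSeparated
      ((insert 1 (S⁻¹ * S) ^ 2 ^ (n + 1))⁻¹ * insert 1 (S⁻¹ * S) ^ 2 ^ (n + 1)) A) :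
    ∃ φ' : X → ι → X, Measurable φ' ∧ Set.EqOn φ φ' D ∧
      PartialMatching (orbitNeighbors S) (n + 1) (D ∪ A) φ' := by
  set U := ⋃ x ∈ D, Set.range (φ x) with hUdef
  have hU : MeasurableSet U := by
    have hrange : U = ⋃ i, (φ · i) '' D := by
      ext z
      simp only [hUdef, Set.mem_iUnion, Set.mem_range, Set.mem_image, exists_prop]
      exact ⟨fun ⟨x, hx, i, hi⟩ => ⟨i, x, hx, hi⟩, fun ⟨i, x, hx, hi⟩ => ⟨x, hx, i, hi⟩⟩
    rw [hrange]
    refine .iUnion fun i => measurableSet_image_of_mem_orbit (Γ := Γ) hD hφ.eval fun x hx => ?_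
    obtain ⟨s, -, hs⟩ := mem_image.1 (h.isMatching.mem_neighbors x hx i)
    exact ⟨s, hs⟩
  obtain ⟨σ, hσ, hσchoice⟩ := exists_measurable_forall_mem_eq
    (measurableSet_setOf_isChoice S hU hD.compl)
    (g := fun (c : ι → Γ) w i => c i • w) fun c => measurable_pi_lambda _ fun i =>
      measurable_const_smul (c i)
  have hchoice : ∀ w ∈ Dᶜ, IsChoice (orbitNeighbors S) U (Dᶜ ∩ orbit Γ w) w (σ w) := by
    intro w hw
    have : Nonempty X := ⟨w⟩
    obtain ⟨ψ, hψ⟩ := (h.expandingHall.hall.mono Set.inter_subset_left).exists_isChoice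
      (Z := Dᶜ ∩ orbit Γ w) ⟨hw, mem_orbit_self w⟩
    choose c _ hc using fun i => mem_image.1 (hψ.mem_neighbors i)
    obtain ⟨d, hd, hσd⟩ := hσchoice w (Set.mem_iUnion.2 ⟨c, by
      rwa [← funext hc] at hψ⟩)
    rwa [hσd]
  refine ⟨D.piecewise φ σ, hφ.piecewise hD hσ, fun x hx => (D.piecewise_eq_of_mem _ _ hx).symm, ?_⟩
  refine h.union (fun x hx => (D.piecewise_eq_of_mem _ _ hx).symm) hA.pairwiseDisjoint_linkBall
    (fun w => linkBall_orbitNeighbors_subset_orbit S w _) fun w hw => ?_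
  rw [D.piecewise_eq_of_notMem _ _ hw.2]
  exact hchoice w hw.2

theorem exists_measurable_isMatching_iUnion [Fintype ι] [Countable Γ] {A : ℕ → Set X}
    (hS : ∀ F : Finset X, 2 * Fintype.card ι * #F ≤ #(F.biUnion (orbitNeighbors S)))
    (hAmeas : ∀ n, MeasurableSet (A n))
    (hA : ∀ n, IsSMulSeparated
      ((insert 1 (S⁻¹ * S) ^ 2 ^ (n + 1))⁻¹ * insert 1 (S⁻¹ * S) ^ 2 ^ (n + 1)) (A n)) :
    ∃ φ : X → ι → X, Measurable φ ∧ IsMatching (orbitNeighbors S) ∅ (⋃ n, A n) φ := by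
  let D (n : ℕ) : Set X := ⋃ m, ⋃ _ : m < n, A m
  have hDsucc (n : ℕ) : D (n + 1) = D n ∪ A n := Set.biUnion_lt_succ A n
  have hDmono : Monotone D := monotone_nat_of_le_succ fun n => hDsucc n ▸ Set.subset_union_left
  have hDmeas (n : ℕ) : MeasurableSet (D n) := .iUnion fun m => .iUnion fun _ => hAmeas m
  let P (n : ℕ) (φ : X → ι → X) : Prop :=
    Measurable φ ∧ PartialMatching (orbitNeighbors S) n (D n) φ
  have hzero : P 0 fun x _ => x := by
    have hD : D 0 = ∅ := by simp only [D, not_lt_zero, Set.iUnion_of_empty, Set.iUnion_empty]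
    exact ⟨measurable_pi_lambda _ fun _ => measurable_id, hD ▸ partialMatching_empty hS _⟩
  have hsucc (n : ℕ) (φ : {φ // P n φ}) : ∃ φ' : {φ // P (n + 1) φ}, Set.EqOn φ.1 φ'.1 (D n) := by
    obtain ⟨φ', hφ', heq, hmatch⟩ := φ.2.2.exists_union φ.2.1 (hDmeas n) (hA n)
    exact ⟨⟨φ', hφ', hDsucc n ▸ hmatch⟩, heq⟩
  choose next hnext using hsucc
  let φ (n : ℕ) : {φ // P n φ} := Nat.rec ⟨_, hzero⟩ next n
  have heq {m n : ℕ} (hmn : m ≤ n) : Set.EqOn (φ m).1 (φ n).1 (D m) := by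
    induction n, hmn using Nat.le_induction with
    | base => exact Set.eqOn_refl _ _
    | succ n hmn ih => exact ih.trans ((hnext n (φ n)).mono (hDmono hmn))
  obtain ⟨f, hf, hfeq⟩ := exists_measurable_piecewise D hDmeas (fun n => (φ n).1)
    (fun n => (φ n).2.1) fun m n _ x hx => (le_total m n).elim (fun h => heq h hx.1)
      fun h => (heq h hx.2).symm
  have hmatch (n : ℕ) : IsMatching (orbitNeighbors S) ∅ (D n) f :=
    (φ n).2.2.isMatching.congr (hfeq n).symm
  refine ⟨f, hf, ?_⟩
  rw [← Set.biUnion_lt_eq_iUnion]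
  exact .iUnion hDmono hmatch

end OrbitMatchings

section Forests

open Function

variable {X : Type*} {R : Set X} {G h : Bool → X → X} {f g p : X → X} {x : X}

theorem notMem_periodicPts_of_iterate_eq
    (hfg : ∀ x, ∃ a m, f^[a] (g x) = f^[a + m + 1] x) (hf : ∀ x, x ∉ periodicPts f) (x : X) :
    x ∉ periodicPts g := by
  have hiterate (n : ℕ) : ∃ a m, f^[a] (g^[n] x) = f^[a + m + n] x := by
    induction n with
    | zero => exact ⟨0, 0, rfl⟩
    | succ n ih =>
      obtain ⟨a, m, ham⟩ := ih
      obtain ⟨b, k, hbk⟩ := hfg (g^[n] x)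
      refine ⟨b + a, k + m, ?_⟩
      calc f^[b + a] (g^[n + 1] x) = f^[a] (f^[b] (g (g^[n] x))) := by
            rw [iterate_succ_apply', add_comm, iterate_add_apply]
        _ = f^[b + k + 1] (f^[a] (g^[n] x)) := by
            rw [hbk, ← iterate_add_apply, ← iterate_add_apply, add_comm a]
        _ = f^[b + a + (k + m) + (n + 1)] x := by
            rw [ham, ← iterate_add_apply]
            congr 1
            lia
  rintro ⟨n, hn, hx⟩
  obtain ⟨a, m, ham⟩ := hiterate n
  rw [hx.eq] at ham
  refine hf (f^[a] x) ⟨m + n, by lia, ?_⟩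
  rw [IsPeriodicPt, IsFixedPt, ← iterate_add_apply, show m + n + a = a + m + n by ring]
  exact ham.symm

/-- The maps `h false` and `h true` assign to each point two distinct children for the parent map
`p`, without creating cycles. -/
structure IsAcyclicBranching (h : Bool → X → X) (p : X → X) : Prop where
  apply : ∀ b x, p (h b x) = x
  false_ne_true : ∀ x, h false x ≠ h true x
  notMem_periodicPts : ∀ b x, h b x ∉ periodicPts p

section AcyclicChild

/-- Two children of `x` for the parent map `p`, chosen among the three children `g i x` so as to
avoid the cycles of `p`. -/
noncomputable def acyclicChild (g : Option Bool → X → X) (p : X → X) (b : Bool) (x : X) : X :=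
  open scoped Classical in if g (some b) x ∈ periodicPts p then g none x else g (some b) x

variable {g : Option Bool → X → X}

theorem isAcyclicBranching_acyclicChild (hg : Injective (uncurry g))
    (hp : ∀ i x, p (g i x) = x) : IsAcyclicBranching (acyclicChild g p) p := by
  have hne {i j : Option Bool} (hij : i ≠ j) (x : X) : g i x ≠ g j x := fun heq =>
    hij (congrArg Prod.fst (hg (a₁ := (i, x)) (a₂ := (j, x)) heq))
  have hperiodic {i j : Option Bool} {x : X} (hi : g i x ∈ periodicPts p)
      (hj : g j x ∈ periodicPts p) : i = j := by
    by_contra hij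
    exact hne hij x ((bijOn_periodicPts p).injOn hi hj (by rw [hp, hp]))
  refine ⟨fun b x => ?_, fun x => ?_, fun b x => ?_⟩ <;> unfold acyclicChild
  · split_ifs <;> exact hp _ x
  · split_ifs with hfalse htrue
    · exact absurd (hperiodic hfalse htrue) (by decide)
    all_goals exact hne (by decide) x
  · split_ifs with hb
    · exact fun hnone => Option.some_ne_none b (hperiodic hb hnone)
    · exact hb

end AcyclicChild

/-- `f` is the parent map of a forest without roots or cycles in which the children of `x` are
`G true x` and, unless `x ∈ R`, also `G false x`. -/
structure IsForest (R : Set X) (G : Bool → X → X) (f : X → X) : Prop where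
  apply_true : ∀ x, f (G true x) = x
  apply_false : ∀ x ∉ R, f (G false x) = x
  false_ne_true : ∀ x ∉ R, G false x ≠ G true x
  eq_or_eq : ∀ x, G true (f x) = x ∨ f x ∉ R ∧ G false (f x) = x
  notMem_periodicPts : ∀ x, x ∉ periodicPts f

/-- The points of the rays `x, g x, g (g x), …` starting in `R`. -/
def rays (g : X → X) (R : Set X) : Set X :=
  ⋃ n, g^[n] '' R

theorem subset_rays (g : X → X) (R : Set X) : R ⊆ rays g R :=
  fun x hx => Set.mem_iUnion.2 ⟨0, x, hx, rfl⟩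

theorem mem_rays_iff : x ∈ rays g R ↔ x ∈ R ∨ ∃ y ∈ rays g R, g y = x := by
  constructor
  · intro hx
    obtain ⟨n, r, hr, rfl⟩ := Set.mem_iUnion.1 hx
    cases n with
    | zero => exact Or.inl hr
    | succ n =>
      exact Or.inr ⟨_, Set.mem_iUnion.2 ⟨n, r, hr, rfl⟩, (iterate_succ_apply' g n r).symm⟩
  · rintro (hx | ⟨y, hy, rfl⟩)
    · exact subset_rays g R hx
    · obtain ⟨n, r, hr, rfl⟩ := Set.mem_iUnion.1 hy
      exact Set.mem_iUnion.2 ⟨n + 1, r, hr, iterate_succ_apply' g n r⟩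

theorem apply_mem_rays_iff (hg : Injective g) (hgR : ∀ y, g y ∉ R) :
    g x ∈ rays g R ↔ x ∈ rays g R := by
  rw [mem_rays_iff, or_iff_right (hgR x)]
  exact ⟨fun ⟨y, hy, hyx⟩ => hg hyx ▸ hy, fun hx => ⟨x, hx, rfl⟩⟩

section RayReversal

open scoped Classical

/-- The points which are not a child of any point. -/
def rootSet (h : Bool → X → X) : Set X :=
  {x | ∀ b y, h b y ≠ x}

/-- The points of the rays along `h false` starting at the roots. -/
def rootRays (h : Bool → X → X) : Set X :=
  rays (h false) (rootSet h)

/-- The parent map obtained from `p` by reversing the rays along `h false` which start at the roots,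
so that the roots acquire a parent. -/
noncomputable def reversedParent (h : Bool → X → X) (p : X → X) : X → X :=
  (rootRays h).piecewise (h false) p

/-- The child maps corresponding to `reversedParent h p`. -/
noncomputable def reversedChild (h : Bool → X → X) (p : X → X) : Bool → X → X
  | true => h true
  | false => (rootRays h).piecewise p (h false)

theorem notMem_rootSet_of_notMem_rootRays (hx : x ∉ rootRays h) : x ∉ rootSet h :=
  fun hxR => hx (subset_rays _ _ hxR)

theorem reversedParent_of_mem (hx : x ∈ rootRays h) : reversedParent h p x = h false x :=
  Set.piecewise_eq_of_mem _ _ _ hx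

theorem reversedParent_of_notMem (hx : x ∉ rootRays h) : reversedParent h p x = p x :=
  Set.piecewise_eq_of_notMem _ _ _ hx

theorem reversedChild_false_of_mem (hx : x ∈ rootRays h) : reversedChild h p false x = p x :=
  Set.piecewise_eq_of_mem _ _ _ hx

theorem reversedChild_false_of_notMem (hx : x ∉ rootRays h) :
    reversedChild h p false x = h false x :=
  Set.piecewise_eq_of_notMem _ _ _ hx

namespace IsAcyclicBranching

variable (hp : IsAcyclicBranching h p)
include hp

theorem injective (b : Bool) : Injective (h b) :=
  LeftInverse.injective (hp.apply b)

theorem false_mem_rootRays_iff : h false x ∈ rootRays h ↔ x ∈ rootRays h :=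
  apply_mem_rays_iff (hp.injective false) fun y hy => hy false y rfl

theorem true_notMem_rootRays (x : X) : h true x ∉ rootRays h := by
  rw [rootRays, mem_rays_iff]
  rintro (hx | ⟨y, -, hyx⟩)
  · exact hx true x rfl
  · have hy : y = x := by rw [← hp.apply false y, hyx, hp.apply]
    exact hp.false_ne_true x (hy ▸ hyx)

theorem exists_apply_eq (hx : x ∉ rootSet h) : ∃ b, h b (p x) = x := by
  obtain ⟨b, y, rfl⟩ : ∃ b y, h b y = x := by
    simpa only [rootSet, Set.mem_ofPred_eq, not_forall, not_not] using hx
  exact ⟨b, by rw [hp.apply]⟩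

theorem false_parent_eq (hx : x ∈ rootRays h) (hxR : x ∉ rootSet h) :
    p x ∈ rootRays h ∧ h false (p x) = x := by
  obtain ⟨y, hy, rfl⟩ := (mem_rays_iff.1 hx).resolve_left hxR
  rw [hp.apply]
  exact ⟨hy, rfl⟩

theorem iterate_reversedParent_of_mem (hx : x ∈ rootRays h) (n : ℕ) :
    (reversedParent h p)^[n] x = (h false)^[n] x ∧ (h false)^[n] x ∈ rootRays h := by
  induction n with
  | zero => exact ⟨rfl, hx⟩
  | succ n ih =>
    rw [iterate_succ_apply', iterate_succ_apply', ih.1]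
    exact ⟨reversedParent_of_mem ih.2, hp.false_mem_rootRays_iff.2 ih.2⟩

theorem iterate_reversedParent_of_notMem {n : ℕ}
    (hx : (reversedParent h p)^[n] x ∉ rootRays h) : (reversedParent h p)^[n] x = p^[n] x := by
  induction n with
  | zero => rfl
  | succ n ih =>
    rw [iterate_succ_apply'] at hx
    have hn : (reversedParent h p)^[n] x ∉ rootRays h := fun hmem => hx <| by
      rw [reversedParent_of_mem hmem]
      exact hp.false_mem_rootRays_iff.2 hmem
    rw [iterate_succ_apply', iterate_succ_apply', reversedParent_of_notMem hn, ih hn]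

theorem reversedParent_notMem_periodicPts (x : X) : x ∉ periodicPts (reversedParent h p) := by
  rintro ⟨n, hn, hx⟩
  by_cases hxP : x ∈ rootRays h
  · have hfalse : (h false)^[n] x = x := (hp.iterate_reversedParent_of_mem hxP n).1.symm.trans hx
    have hpx : p^[n] x = x := by
      conv_lhs => rw [← hfalse]
      exact LeftInverse.iterate (hp.apply false) n x
    obtain ⟨m, rfl⟩ := Nat.exists_eq_succ_of_ne_zero hn.ne'
    rw [iterate_succ_apply'] at hfalse
    exact hp.notMem_periodicPts false _ (by rw [hfalse]; exact ⟨_, hn, hpx⟩)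
  · obtain ⟨b, hb⟩ := hp.exists_apply_eq (notMem_rootSet_of_notMem_rootRays hxP)
    have hpx : p^[n] x = x :=
      (hp.iterate_reversedParent_of_notMem (hx.eq.symm ▸ hxP)).symm.trans hx
    exact hp.notMem_periodicPts b (p x) (hb.symm ▸ ⟨n, hn, hpx⟩)

theorem isForest_reversedParent :
    IsForest (rootSet h) (reversedChild h p) (reversedParent h p) where
  apply_true x := (reversedParent_of_notMem (hp.true_notMem_rootRays x)).trans (hp.apply true x)
  apply_false x hx := by
    by_cases hxP : x ∈ rootRays h
    · have hpx := hp.false_parent_eq hxP hx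
      rw [reversedChild_false_of_mem hxP, reversedParent_of_mem hpx.1, hpx.2]
    · rw [reversedChild_false_of_notMem hxP,
        reversedParent_of_notMem (hp.false_mem_rootRays_iff.not.2 hxP), hp.apply]
  false_ne_true x hx := by
    by_cases hxP : x ∈ rootRays h
    · rw [reversedChild_false_of_mem hxP]
      intro (heq : p x = h true x)
      exact hp.true_notMem_rootRays x (heq ▸ (hp.false_parent_eq hxP hx).1)
    · rw [reversedChild_false_of_notMem hxP]
      exact hp.false_ne_true x
  eq_or_eq x := by
    by_cases hxP : x ∈ rootRays h
    · rw [reversedParent_of_mem hxP,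
        reversedChild_false_of_mem (hp.false_mem_rootRays_iff.2 hxP)]
      exact Or.inr ⟨fun hR => hR false x rfl, hp.apply false x⟩
    · rw [reversedParent_of_notMem hxP]
      obtain ⟨b, hb⟩ := hp.exists_apply_eq (notMem_rootSet_of_notMem_rootRays hxP)
      cases b with
      | true => exact Or.inl hb
      | false =>
        have hpx : p x ∉ rootRays h := fun hpx =>
          hxP (hb ▸ hp.false_mem_rootRays_iff.2 hpx)
        rw [reversedChild_false_of_notMem hpx]
        exact Or.inr ⟨notMem_rootSet_of_notMem_rootRays hpx, hb⟩
  notMem_periodicPts := hp.reversedParent_notMem_periodicPts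

end IsAcyclicBranching

end RayReversal

section RaySkipping

open scoped Classical

/-- The child maps obtained by making each ray `r, G true r, G true (G true r), …` with `r ∈ R`
branch into its points with even and odd index, so that `r` gets two children. -/
noncomputable def skippingChild (R : Set X) (G : Bool → X → X) : Bool → X → X
  | true => (rays (G true) R).piecewise (G true ∘ G true) (G true)
  | false => R.piecewise (G true) (G false)

/-- The parent map corresponding to `skippingChild R G`. -/
noncomputable def skippingParent (R : Set X) (G : Bool → X → X) (f : X → X) : X → X :=
  (G true '' (G true '' rays (G true) R)).piecewise (f ∘ f) f

theorem skippingChild_true_of_mem (hx : x ∈ rays (G true) R) :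
    skippingChild R G true x = G true (G true x) :=
  Set.piecewise_eq_of_mem _ _ _ hx

theorem skippingChild_true_of_notMem (hx : x ∉ rays (G true) R) :
    skippingChild R G true x = G true x :=
  Set.piecewise_eq_of_notMem _ _ _ hx

theorem skippingChild_false_of_mem (hx : x ∈ R) : skippingChild R G false x = G true x :=
  Set.piecewise_eq_of_mem _ _ _ hx

theorem skippingChild_false_of_notMem (hx : x ∉ R) : skippingChild R G false x = G false x :=
  Set.piecewise_eq_of_notMem _ _ _ hx

theorem skippingParent_of_mem (hx : x ∈ G true '' (G true '' rays (G true) R)) :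
    skippingParent R G f x = f (f x) :=
  Set.piecewise_eq_of_mem _ _ _ hx

theorem skippingParent_of_notMem (hx : x ∉ G true '' (G true '' rays (G true) R)) :
    skippingParent R G f x = f x :=
  Set.piecewise_eq_of_notMem _ _ _ hx

namespace IsForest

variable (hG : IsForest R G f)
include hG

theorem injective_true : Injective (G true) :=
  LeftInverse.injective hG.apply_true

theorem false_ne_true_apply (hx : x ∉ R) (y : X) : G false x ≠ G true y := fun heq =>
  hG.false_ne_true x hx <| by rw [heq, ← hG.apply_true y, ← heq, hG.apply_false x hx]

theorem skippingParent_true (hx : x ∉ G true '' rays (G true) R) :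
    skippingParent R G f (G true x) = x := by
  rw [skippingParent_of_notMem (hG.injective_true.mem_set_image.not.2 hx), hG.apply_true]

theorem skippingParent_notMem_periodicPts (x : X) : x ∉ periodicPts (skippingParent R G f) := by
  refine notMem_periodicPts_of_iterate_eq (fun x => ?_) hG.notMem_periodicPts x
  by_cases hx : x ∈ G true '' (G true '' rays (G true) R)
  · exact ⟨0, 1, skippingParent_of_mem hx⟩
  · exact ⟨0, 0, skippingParent_of_notMem hx⟩

theorem skippingChild_parent (x : X) :
    skippingChild R G true (skippingParent R G f x) = x ∨
      skippingParent R G f x ∉ (∅ : Set X) ∧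
        skippingChild R G false (skippingParent R G f x) = x := by
  by_cases hx : x ∈ G true '' (G true '' rays (G true) R)
  · obtain ⟨_, ⟨y, hy, rfl⟩, rfl⟩ := hx
    rw [skippingParent_of_mem ⟨_, ⟨y, hy, rfl⟩, rfl⟩, hG.apply_true, hG.apply_true]
    exact Or.inl (skippingChild_true_of_mem hy)
  rw [skippingParent_of_notMem hx]
  rcases hG.eq_or_eq x with htrue | ⟨hfx, hfalse⟩
  · rw [← htrue, hG.injective_true.mem_set_image] at hx
    by_cases hQ : f x ∈ rays (G true) R
    · have hfR : f x ∈ R := (mem_rays_iff.1 hQ).resolve_right hx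
      exact Or.inr ⟨Set.notMem_empty _, by rw [skippingChild_false_of_mem hfR, htrue]⟩
    · exact Or.inl (by rw [skippingChild_true_of_notMem hQ, htrue])
  · exact Or.inr ⟨Set.notMem_empty _, by rw [skippingChild_false_of_notMem hfx, hfalse]⟩

theorem isForest_skipping (hR : ∀ x, G true x ∉ R) :
    IsForest ∅ (skippingChild R G) (skippingParent R G f) where
  apply_true x := by
    by_cases hx : x ∈ rays (G true) R
    · rw [skippingChild_true_of_mem hx, skippingParent_of_mem ⟨_, ⟨x, hx, rfl⟩, rfl⟩,
        hG.apply_true, hG.apply_true]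
    · rw [skippingChild_true_of_notMem hx, hG.skippingParent_true]
      exact fun hmem => hx (mem_rays_iff.2 (Or.inr hmem))
  apply_false x _ := by
    by_cases hx : x ∈ R
    · rw [skippingChild_false_of_mem hx, hG.skippingParent_true]
      rintro ⟨y, -, rfl⟩
      exact hR y hx
    · rw [skippingChild_false_of_notMem hx, skippingParent_of_notMem, hG.apply_false x hx]
      rintro ⟨y, -, hy⟩
      exact hG.false_ne_true_apply hx y hy.symm
  false_ne_true x _ := by
    by_cases hxR : x ∈ R
    · rw [skippingChild_false_of_mem hxR, skippingChild_true_of_mem (subset_rays _ _ hxR)]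
      exact fun heq => hR x (hG.injective_true heq ▸ hxR)
    · rw [skippingChild_false_of_notMem hxR]
      by_cases hx : x ∈ rays (G true) R
      · rw [skippingChild_true_of_mem hx]
        exact hG.false_ne_true_apply hxR _
      · rw [skippingChild_true_of_notMem hx]
        exact hG.false_ne_true_apply hxR _
  eq_or_eq := hG.skippingChild_parent
  notMem_periodicPts := hG.skippingParent_notMem_periodicPts

end IsForest

end RaySkipping

end Forests

section CayleyForests

open Function

variable {X α : Type*}

/-- The structure of a disjoint union of Cayley trees of the free group on `α` on `X`, given by a
parent map `U` without cycles: the edge from `x` to `U x` carries the letter `c x`, and the edges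
from `x` to its children `D d x` carry the inverses of the letters `d` with `d⁻¹ ≠ c x`. The inverse
of the letter `d` is `(d.1, !d.2)`. -/
structure IsCayleyForest (U : X → X) (c : X → α × Bool) (D : α × Bool → X → X) : Prop where
  letter_child : ∀ d x, c x ≠ (d.1, !d.2) → c (D d x) = d
  parent_child : ∀ d x, c x ≠ (d.1, !d.2) → U (D d x) = x
  child_parent : ∀ x, D (c x) (U x) = x
  letter_parent_ne : ∀ x, c (U x) ≠ ((c x).1, !(c x).2)
  notMem_periodicPts : ∀ x, x ∉ periodicPts U

section OfForest

variable {R : Set X} {G : Bool → X → X} {f : X → X}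

/-- Whether `x` is the child `G true` of its parent `f x`. -/
noncomputable def childLabel (G : Bool → X → X) (f : X → X) (x : X) : Bool :=
  open scoped Classical in decide (G true (f x) = x)

theorem IsForest.apply (h : IsForest ∅ G f) (b : Bool) (x : X) : f (G b x) = x := by
  cases b with
  | true => exact h.apply_true x
  | false => exact h.apply_false x (Set.notMem_empty x)

theorem IsForest.childLabel_apply (h : IsForest ∅ G f) (b : Bool) (x : X) :
    childLabel G f (G b x) = b := by
  rw [childLabel, h.apply]
  cases b with
  | true => exact @decide_eq_true _ (_) rfl
  | false => exact @decide_eq_false _ (_) (h.false_ne_true x (Set.notMem_empty x)).symm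

theorem IsForest.exists_eq (h : IsForest ∅ G f) (x : X) : ∃ a y, x = G a y := by
  rcases h.eq_or_eq x with hx | ⟨-, hx⟩
  · exact ⟨true, f x, hx.symm⟩
  · exact ⟨false, f x, hx.symm⟩

/-- The letter of the edge above `x` in the Cayley forest obtained from a binary forest. -/
noncomputable def forestLetter (G : Bool → X → X) (f : X → X) (x : X) : Bool × Bool :=
  (childLabel G f x, childLabel G f (f x))

/-- The parent map of the Cayley forest obtained from a binary forest. -/
noncomputable def forestParent (G : Bool → X → X) (f : X → X) (x : X) : X :=
  if childLabel G f (f (f x)) = childLabel G f x then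
    G (childLabel G f x) (G (childLabel G f (f x)) (f (f (f x))))
  else f (f x)

/-- The child maps of the Cayley forest obtained from a binary forest: the children of the point
`x = G a (G b w)` are its grandchildren `G a' (G e x)` with `a' ≠ a`, and `G a (G b (G a w))`. -/
noncomputable def forestChild (G : Bool → X → X) (f : X → X) (d : Bool × Bool) (x : X) : X :=
  if childLabel G f x = d.1 then G d.1 (G d.2 (G d.1 (f (f x)))) else G d.1 (G d.2 x)

theorem IsForest.isCayleyForest (h : IsForest ∅ G f) :
    IsCayleyForest (forestParent G f) (forestLetter G f) (forestChild G f) where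
  letter_child := by
    rintro ⟨d, e⟩ x hx
    obtain ⟨a, y, rfl⟩ := h.exists_eq x
    obtain ⟨b, z, rfl⟩ := h.exists_eq y
    simp only [forestLetter, forestChild, h.apply, h.childLabel_apply] at hx ⊢
    cases a <;> cases b <;> cases d <;> cases e <;> simp_all [h.apply, h.childLabel_apply]
  parent_child := by
    rintro ⟨d, e⟩ x hx
    obtain ⟨a, y, rfl⟩ := h.exists_eq x
    obtain ⟨b, z, rfl⟩ := h.exists_eq y
    simp only [forestLetter, forestParent, forestChild, h.apply, h.childLabel_apply] at hx ⊢
    cases a <;> cases b <;> cases d <;> cases e <;> simp_all [h.apply, h.childLabel_apply]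
  child_parent x := by
    obtain ⟨a, y, rfl⟩ := h.exists_eq x
    obtain ⟨b, z, rfl⟩ := h.exists_eq y
    obtain ⟨c, w, rfl⟩ := h.exists_eq z
    simp only [forestLetter, forestParent, forestChild, h.apply, h.childLabel_apply]
    split_ifs <;> simp_all [h.apply, h.childLabel_apply]
  letter_parent_ne x := by
    obtain ⟨a, y, rfl⟩ := h.exists_eq x
    obtain ⟨b, z, rfl⟩ := h.exists_eq y
    obtain ⟨c, w, rfl⟩ := h.exists_eq z
    simp only [forestLetter, forestParent, h.apply, h.childLabel_apply]
    split_ifs <;> simp_all [h.apply, h.childLabel_apply]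
  notMem_periodicPts := by
    refine notMem_periodicPts_of_iterate_eq (fun x => ?_) h.notMem_periodicPts
    unfold forestParent
    split_ifs
    · exact ⟨2, 0, by simp only [iterate_succ_apply, iterate_zero_apply, h.apply]⟩
    · exact ⟨0, 1, rfl⟩

end OfForest

theorem exists_isCyclicallyReduced_eq_conj (w : FreeGroup α) :
    ∃ (g : FreeGroup α) (u : List (α × Bool)),
      FreeGroup.IsCyclicallyReduced u ∧ w = g * FreeGroup.mk u * g⁻¹ := by
  classical
  refine ⟨FreeGroup.mk (FreeGroup.reduceCyclically.conjugator w.toWord),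
    FreeGroup.reduceCyclically w.toWord,
    FreeGroup.reduceCyclically.isCyclicallyReduced FreeGroup.isReduced_toWord, ?_⟩
  rw [FreeGroup.inv_mk, FreeGroup.mul_mk, FreeGroup.mul_mk,
    FreeGroup.reduceCyclically.conj_conjugator_reduceCyclically, FreeGroup.mk_toWord]

namespace IsCayleyForest

open scoped Classical

/-- The neighbor of `x` along the edge with letter `d`. -/
noncomputable def move (U : X → X) (c : X → α × Bool) (D : α × Bool → X → X) (d : α × Bool)
    (x : X) : X :=
  if c x = d then U x else D (d.1, !d.2) x

variable {U : X → X} {c : X → α × Bool} {D : α × Bool → X → X} {d : α × Bool} {x : X}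
  (h : IsCayleyForest U c D)

theorem move_of_eq (hx : c x = d) : move U c D d x = U x :=
  if_pos hx

theorem move_of_ne (hx : c x ≠ d) : move U c D d x = D (d.1, !d.2) x :=
  if_neg hx

include h

theorem letter_move (hx : c x ≠ d) : c (move U c D d x) = (d.1, !d.2) := by
  rw [move_of_ne hx]
  exact h.letter_child _ _ (by rwa [Bool.not_not])

theorem parent_move (hx : c x ≠ d) : U (move U c D d x) = x := by
  rw [move_of_ne hx]
  exact h.parent_child _ _ (by rwa [Bool.not_not])

theorem move_inv_move (d : α × Bool) (x : X) :
    move U c D (d.1, !d.2) (move U c D d x) = x := by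
  by_cases hx : c x = d
  · subst hx
    rw [move_of_eq rfl, move_of_ne (h.letter_parent_ne x), Bool.not_not]
    exact h.child_parent x
  · rw [move_of_eq (h.letter_move hx), h.parent_move hx]

/-- The permutation of `X` moving along the edges with letter `d`. -/
noncomputable def movePerm (d : α × Bool) : Equiv.Perm X where
  toFun := move U c D d
  invFun := move U c D (d.1, !d.2)
  left_inv := h.move_inv_move d
  right_inv x := by simpa only [Bool.not_not] using h.move_inv_move (d.1, !d.2) x

/-- The action of the free group on `α` whose generators move along the edges with letter
`(a, true)`. -/
noncomputable def wordPerm : FreeGroup α →* Equiv.Perm X :=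
  FreeGroup.lift fun a => h.movePerm (a, true)

theorem wordPerm_mk_nil (x : X) : h.wordPerm (FreeGroup.mk []) x = x := by
  rw [← FreeGroup.one_eq_mk, map_one, Equiv.Perm.one_apply]

theorem wordPerm_mk_cons (d : α × Bool) (w : List (α × Bool)) (x : X) :
    h.wordPerm (FreeGroup.mk (d :: w)) x = move U c D d (h.wordPerm (FreeGroup.mk w) x) := by
  rw [wordPerm, FreeGroup.lift_mk, FreeGroup.lift_mk, List.map_cons, List.prod_cons,
    Equiv.Perm.mul_apply]
  obtain ⟨a, b⟩ := d
  cases b <;> rfl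

theorem letter_wordPerm_mk {w : List (α × Bool)} (hw : FreeGroup.IsReduced (d :: w))
    (hx : ∀ e ∈ (d :: w).getLast?, c x ≠ e) :
    c (h.wordPerm (FreeGroup.mk w) x) ≠ d ∧
      U^[w.length] (h.wordPerm (FreeGroup.mk w) x) = x := by
  induction w generalizing d with
  | nil =>
    rw [h.wordPerm_mk_nil]
    exact ⟨hx d rfl, rfl⟩
  | cons e w ih =>
    obtain ⟨hne, hU⟩ := ih hw.tail (by rwa [List.getLast?_cons_cons] at hx)
    rw [h.wordPerm_mk_cons, List.length_cons, iterate_succ_apply, h.parent_move hne,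
      h.letter_move hne]
    refine ⟨?_, hU⟩
    rintro rfl
    simp at hw

theorem iterate_length_wordPerm_mk {w : List (α × Bool)} (hw : FreeGroup.IsReduced w)
    (hx : ∀ e ∈ w.getLast?, c x ≠ e) :
    U^[w.length] (h.wordPerm (FreeGroup.mk w) x) = x := by
  cases w with
  | nil => exact h.wordPerm_mk_nil x
  | cons d w =>
    obtain ⟨hne, hU⟩ := h.letter_wordPerm_mk hw hx
    rw [h.wordPerm_mk_cons, List.length_cons, iterate_succ_apply, h.parent_move hne, hU]

theorem getLast_eq_of_wordPerm_mk_eq {w : List (α × Bool)} (hw : FreeGroup.IsReduced w)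
    (hne : w ≠ []) (hx : h.wordPerm (FreeGroup.mk w) x = x) : w.getLast hne = c x := by
  by_contra hlast
  have hiterate := h.iterate_length_wordPerm_mk hw (x := x) fun e he => by
    rw [List.getLast?_eq_getLast_of_ne_nil hne, Option.mem_some_iff] at he
    exact he ▸ Ne.symm hlast
  rw [hx] at hiterate
  exact h.notMem_periodicPts x ⟨w.length, List.length_pos_iff.2 hne, hiterate⟩

/-- A fixed point of a reduced word has as letter both the last letter of the word and the inverse
of its first letter. -/
theorem wordPerm_mk_ne {w : List (α × Bool)} (hw : FreeGroup.IsCyclicallyReduced w)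
    (hne : w ≠ []) (x : X) : h.wordPerm (FreeGroup.mk w) x ≠ x := by
  intro hx
  have hlast := h.getLast_eq_of_wordPerm_mk_eq hw.1 hne hx
  have hinv : h.wordPerm (FreeGroup.mk (FreeGroup.invRev w)) x = x := by
    rw [← FreeGroup.inv_mk, map_inv, Equiv.Perm.inv_eq_iff_eq, hx]
  have hreduced : FreeGroup.IsReduced (FreeGroup.invRev w) := by
    rw [FreeGroup.isReduced_iff_reduce_eq, FreeGroup.reduce_invRev, hw.1.reduce_eq]
  cases w with
  | nil => exact hne rfl
  | cons d w =>
    have hfirst := h.getLast_eq_of_wordPerm_mk_eq hreduced (by simp [FreeGroup.invRev]) hinv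
    simp only [FreeGroup.invRev, List.map_cons, List.reverse_cons, List.getLast_append_singleton]
      at hfirst
    have hcyclic := hw.2 _ (List.getLast?_eq_getLast_of_ne_nil hne) d rfl
    rw [hlast, ← hfirst] at hcyclic
    exact Bool.not_ne_self _ (hcyclic rfl)

theorem wordPerm_ne {w : FreeGroup α} (hw : w ≠ 1) (x : X) : h.wordPerm w x ≠ x := by
  obtain ⟨g, u, hu, rfl⟩ := exists_isCyclicallyReduced_eq_conj w
  have hne : u ≠ [] := by
    rintro rfl
    exact hw (by rw [← FreeGroup.one_eq_mk, mul_one, mul_inv_cancel])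
  intro hx
  refine h.wordPerm_mk_ne hu hne ((h.wordPerm g)⁻¹ x) ?_
  rw [Equiv.Perm.eq_inv_iff_eq]
  simpa only [map_mul, map_inv, Equiv.Perm.mul_apply] using hx

end IsCayleyForest

end CayleyForests

section LipschitzMaps

open Function
open scoped Classical

variable {Γ X : Type*}

/-- The map `f` is Lipschitz for the action of `Γ`: it moves each point by one of finitely many
elements of `Γ`. -/
def IsSMulLipschitz (Γ : Type*) {X : Type*} [SMul Γ X] (f : X → X) : Prop :=
  ∃ S : Finset Γ, ∀ x, ∃ γ ∈ S, f x = γ • x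

namespace IsSMulLipschitz

variable [Group Γ] [MulAction Γ X] {f g : X → X}

theorem id : IsSMulLipschitz Γ (id : X → X) :=
  ⟨{1}, fun x => ⟨1, Finset.mem_singleton_self 1, (one_smul Γ x).symm⟩⟩

theorem of_inv_smul {ι : Type*} [Finite ι] {α : ι → Γ} (hf : ∀ x, ∃ i, f x = (α i)⁻¹ • x) :
    IsSMulLipschitz Γ f := by
  have := Fintype.ofFinite ι
  refine ⟨Finset.univ.image fun i => (α i)⁻¹, fun x => ?_⟩
  obtain ⟨i, hi⟩ := hf x
  exact ⟨_, Finset.mem_image_of_mem _ (Finset.mem_univ i), hi⟩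

theorem comp (hf : IsSMulLipschitz Γ f) (hg : IsSMulLipschitz Γ g) :
    IsSMulLipschitz Γ (f ∘ g) := by
  obtain ⟨S, hS⟩ := hf
  obtain ⟨T, hT⟩ := hg
  refine ⟨S * T, fun x => ?_⟩
  obtain ⟨δ, hδ, hgx⟩ := hT x
  obtain ⟨γ, hγ, hfx⟩ := hS (g x)
  exact ⟨γ * δ, Finset.mul_mem_mul hγ hδ, by rw [comp_apply, hfx, hgx, mul_smul]⟩

theorem of_forall_eq_or (hf : IsSMulLipschitz Γ f) (hg : IsSMulLipschitz Γ g) {k : X → X}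
    (hk : ∀ x, k x = f x ∨ k x = g x) : IsSMulLipschitz Γ k := by
  obtain ⟨S, hS⟩ := hf
  obtain ⟨T, hT⟩ := hg
  refine ⟨S ∪ T, fun x => ?_⟩
  rcases hk x with hx | hx
  · obtain ⟨γ, hγ, hfx⟩ := hS x
    exact ⟨γ, Finset.mem_union_left T hγ, hx.trans hfx⟩
  · obtain ⟨γ, hγ, hgx⟩ := hT x
    exact ⟨γ, Finset.mem_union_right S hγ, hx.trans hgx⟩

theorem ite {P : X → Prop} [DecidablePred P] (hf : IsSMulLipschitz Γ f) (hg : IsSMulLipschitz Γ g) :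
    IsSMulLipschitz Γ fun x => if P x then f x else g x :=
  hf.of_forall_eq_or hg fun _ => ite_eq_or_eq _ _ _

end IsSMulLipschitz

/-- A left inverse of all the maps `g i` of a jointly injective family. -/
noncomputable def jointInverse {κ : Type*} (g : κ → X → X) : X → X :=
  extend (uncurry g) Prod.snd id

theorem jointInverse_apply {κ : Type*} {g : κ → X → X} (hg : Injective (uncurry g)) (i : κ)
    (x : X) : jointInverse g (g i x) = x :=
  hg.extend_apply Prod.snd id (i, x)

theorem jointInverse_of_forall_ne {κ : Type*} {g : κ → X → X} {x : X} (hx : ∀ i y, g i y ≠ x) :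
    jointInverse g x = x :=
  extend_apply' _ _ _ fun ⟨⟨i, y⟩, hy⟩ => hx i y hy

theorem preimage_jointInverse {κ : Type*} {g : κ → X → X} (hg : Injective (uncurry g))
    (s : Set X) : jointInverse g ⁻¹' s = (⋃ i, g i '' s) ∪ (s \ ⋃ i, Set.range (g i)) := by
  ext x
  simp only [Set.mem_preimage, Set.mem_union, Set.mem_iUnion, Set.mem_sdiff, Set.mem_image,
    Set.mem_range]
  by_cases hx : ∃ i y, g i y = x
  · rw [or_iff_left fun hxs => hxs.2 hx]
    obtain ⟨i, y, rfl⟩ := hx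
    rw [jointInverse_apply hg]
    refine ⟨fun hy => ⟨i, y, hy, rfl⟩, fun ⟨j, z, hz, hzy⟩ => ?_⟩
    obtain ⟨rfl, rfl⟩ := Prod.ext_iff.1 (@hg (j, z) (i, y) hzy)
    exact hz
  · rw [or_iff_right fun ⟨i, y, _, hy⟩ => hx ⟨i, y, hy⟩, and_iff_left hx,
      jointInverse_of_forall_ne fun i y hy => hx ⟨i, y, hy⟩]

/-- A measurable Lipschitz map. -/
structure IsMeasurableLipschitz (Γ : Type*) {X : Type*} [MeasurableSpace X] [SMul Γ X]
    (f : X → X) : Prop where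
  measurable : Measurable f
  isSMulLipschitz : IsSMulLipschitz Γ f

namespace IsMeasurableLipschitz

variable [Group Γ] [MulAction Γ X] [MeasurableSpace X] {f g p : X → X} {h G : Bool → X → X}
  {R s : Set X}

theorem id : IsMeasurableLipschitz Γ (id : X → X) :=
  ⟨measurable_id, .id⟩

theorem comp (hf : IsMeasurableLipschitz Γ f) (hg : IsMeasurableLipschitz Γ g) :
    IsMeasurableLipschitz Γ (f ∘ g) :=
  ⟨hf.measurable.comp hg.measurable, hf.isSMulLipschitz.comp hg.isSMulLipschitz⟩

theorem iterate (hf : IsMeasurableLipschitz Γ f) (n : ℕ) : IsMeasurableLipschitz Γ f^[n] := by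
  induction n with
  | zero => exact .id
  | succ n ih => exact ih.comp hf

theorem ite {P : X → Prop} [DecidablePred P] (hP : MeasurableSet {x | P x})
    (hf : IsMeasurableLipschitz Γ f) (hg : IsMeasurableLipschitz Γ g) :
    IsMeasurableLipschitz Γ fun x => if P x then f x else g x :=
  ⟨hf.measurable.ite hP hg.measurable, hf.isSMulLipschitz.ite hg.isSMulLipschitz⟩

theorem apply_bool {c : X → Bool} (hc : Measurable c)
    (hG : ∀ b, IsMeasurableLipschitz Γ (G b)) (hf : IsMeasurableLipschitz Γ f) :
    IsMeasurableLipschitz Γ fun x => G (c x) (f x) := by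
  have hite : (fun x => G (c x) (f x)) =
      fun x => if c x = true then G true (f x) else G false (f x) := by
    funext x
    cases c x <;> rfl
  rw [hite]
  exact ite (hc (measurableSet_singleton true)) ((hG true).comp hf) ((hG false).comp hf)

variable [MeasurableEq X]

theorem measurableSet_periodicPts (hf : IsMeasurableLipschitz Γ f) :
    MeasurableSet (periodicPts f) := by
  have hunion : periodicPts f = ⋃ n : ℕ, ⋃ _ : 0 < n, {x | f^[n] x = x} := by
    ext x
    simp only [periodicPts, IsPeriodicPt, IsFixedPt, Set.mem_iUnion, Set.mem_ofPred_eq,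
      exists_prop, gt_iff_lt]
  rw [hunion]
  exact .iUnion fun n => .iUnion fun _ =>
    measurableSet_eq_fun (hf.iterate n).measurable measurable_id

theorem acyclicChild {g : Option Bool → X → X}
    (hg : ∀ i, IsMeasurableLipschitz Γ (g i)) (hp : IsMeasurableLipschitz Γ p) (b : Bool) :
    IsMeasurableLipschitz Γ (acyclicChild g p b) :=
  .ite ((hg (some b)).measurable hp.measurableSet_periodicPts) (hg none) (hg (some b))

theorem measurable_childLabel (hG : IsMeasurableLipschitz Γ (G true))
    (hf : IsMeasurableLipschitz Γ f) : Measurable (childLabel G f) := by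
  refine measurable_to_bool ?_
  simp only [Set.preimage, childLabel, Set.mem_singleton_iff, decide_eq_true_eq]
  exact measurableSet_eq_fun (hG.measurable.comp hf.measurable) measurable_id

theorem measurable_forestLetter (hG : IsMeasurableLipschitz Γ (G true))
    (hf : IsMeasurableLipschitz Γ f) : Measurable (forestLetter G f) :=
  (measurable_childLabel hG hf).prodMk ((measurable_childLabel hG hf).comp hf.measurable)

theorem forestParent (hG : ∀ b, IsMeasurableLipschitz Γ (G b))
    (hf : IsMeasurableLipschitz Γ f) : IsMeasurableLipschitz Γ (forestParent G f) := by
  have hlabel := measurable_childLabel (hG true) hf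
  exact .ite (measurableSet_eq_fun (hlabel.comp (hf.comp hf).measurable) hlabel)
    (apply_bool hlabel hG (apply_bool (hlabel.comp hf.measurable) hG (hf.iterate 3)))
    (hf.comp hf)

theorem forestChild (hG : ∀ b, IsMeasurableLipschitz Γ (G b))
    (hf : IsMeasurableLipschitz Γ f) (d : Bool × Bool) :
    IsMeasurableLipschitz Γ (forestChild G f d) :=
  .ite (measurableSet_eq_fun (measurable_childLabel (hG true) hf) measurable_const)
    ((hG d.1).comp <| (hG d.2).comp <| (hG d.1).comp <| hf.comp hf) ((hG d.1).comp (hG d.2))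

variable [Countable Γ] [MeasurableConstSMul Γ X]

theorem measurableSet_image (hf : IsMeasurableLipschitz Γ f) (hs : MeasurableSet s) :
    MeasurableSet (f '' s) := by
  obtain ⟨S, hS⟩ := hf.isSMulLipschitz
  refine measurableSet_image_of_mem_orbit (Γ := Γ) hs hf.measurable fun x _ => ?_
  obtain ⟨γ, -, hγ⟩ := hS x
  exact ⟨γ, hγ.symm⟩

theorem measurableSet_rays (hf : IsMeasurableLipschitz Γ f) (hs : MeasurableSet s) :
    MeasurableSet (rays f s) :=
  .iUnion fun n => (hf.iterate n).measurableSet_image hs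

theorem jointInverse {κ : Type*} [Finite κ] {g : κ → X → X} (hg : Injective (uncurry g))
    (hgl : ∀ i, IsMeasurableLipschitz Γ (g i)) : IsMeasurableLipschitz Γ (jointInverse g) := by
  have := Fintype.ofFinite κ
  refine ⟨fun s hs => ?_, ?_⟩
  · rw [preimage_jointInverse hg]
    refine (MeasurableSet.iUnion fun i => (hgl i).measurableSet_image hs).union
      (hs.diff (.iUnion fun i => ?_))
    rw [← Set.image_univ]
    exact (hgl i).measurableSet_image .univ
  · choose S hS using fun i => (hgl i).isSMulLipschitz
    refine ⟨insert 1 (Finset.univ.biUnion S)⁻¹, fun x => ?_⟩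
    by_cases hx : ∃ i y, g i y = x
    · obtain ⟨i, y, rfl⟩ := hx
      obtain ⟨γ, hγ, heq⟩ := hS i y
      refine ⟨γ⁻¹, Finset.mem_insert_of_mem (Finset.inv_mem_inv ?_), ?_⟩
      · exact Finset.mem_biUnion.2 ⟨i, Finset.mem_univ i, hγ⟩
      · rw [jointInverse_apply hg, heq, inv_smul_smul]
    · push Not at hx
      exact ⟨1, Finset.mem_insert_self _ _, by rw [jointInverse_of_forall_ne hx, one_smul]⟩

theorem measurableSet_rootSet (hh : ∀ b, IsMeasurableLipschitz Γ (h b)) :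
    MeasurableSet (rootSet h) := by
  have hcompl : rootSet h = (⋃ b, h b '' Set.univ)ᶜ := by
    ext x
    simp only [rootSet, Set.image_univ, Set.mem_compl_iff, Set.mem_iUnion, Set.mem_range,
      Set.mem_ofPred_eq, not_exists]
  rw [hcompl]
  exact (MeasurableSet.iUnion fun b => (hh b).measurableSet_image .univ).compl

theorem measurableSet_rootRays (hh : ∀ b, IsMeasurableLipschitz Γ (h b)) :
    MeasurableSet (rootRays h) :=
  (hh false).measurableSet_rays (measurableSet_rootSet hh)

theorem reversedParent (hh : ∀ b, IsMeasurableLipschitz Γ (h b))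
    (hp : IsMeasurableLipschitz Γ p) : IsMeasurableLipschitz Γ (reversedParent h p) :=
  .ite (measurableSet_rootRays hh) (hh false) hp

theorem reversedChild (hh : ∀ b, IsMeasurableLipschitz Γ (h b))
    (hp : IsMeasurableLipschitz Γ p) (b : Bool) :
    IsMeasurableLipschitz Γ (reversedChild h p b) := by
  cases b with
  | true => exact hh true
  | false => exact .ite (measurableSet_rootRays hh) hp (hh false)

theorem skippingChild (hR : MeasurableSet R) (hG : ∀ b, IsMeasurableLipschitz Γ (G b))
    (b : Bool) : IsMeasurableLipschitz Γ (skippingChild R G b) := by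
  cases b with
  | true => exact .ite ((hG true).measurableSet_rays hR) ((hG true).comp (hG true)) (hG true)
  | false => exact .ite hR (hG true) (hG false)

theorem skippingParent (hR : MeasurableSet R) (hG : IsMeasurableLipschitz Γ (G true))
    (hf : IsMeasurableLipschitz Γ f) : IsMeasurableLipschitz Γ (skippingParent R G f) :=
  .ite (hG.measurableSet_image (hG.measurableSet_image (hG.measurableSet_rays hR)))
    (hf.comp hf) hf

end IsMeasurableLipschitz

theorem IsCayleyForest.isMeasurableLipschitz_wordPerm {α : Type*} [Group Γ] [MulAction Γ X]
    [MeasurableSpace X] {U : X → X} {c : X → α × Bool} {D : α × Bool → X → X}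
    (h : IsCayleyForest U c D) (hU : IsMeasurableLipschitz Γ U)
    (hc : ∀ d, MeasurableSet {x | c x = d}) (hD : ∀ d, IsMeasurableLipschitz Γ (D d))
    (w : FreeGroup α) : IsMeasurableLipschitz Γ (h.wordPerm w) := by
  rw [← FreeGroup.mk_toWord (x := w)]
  induction w.toWord with
  | nil => exact funext (h.wordPerm_mk_nil) ▸ .id
  | cons d w ih =>
    exact funext (h.wordPerm_mk_cons d w) ▸ (IsMeasurableLipschitz.ite (hc d) hU (hD _)).comp ih

section Existence

variable [Group Γ] [Countable Γ] [MulAction Γ X] [MeasurableSpace X] [MeasurableEq X]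
  [MeasurableConstSMul Γ X] {g : Option Bool → X → X}

theorem exists_isForest_isMeasurableLipschitz (hg : Injective (uncurry g))
    (hgl : ∀ i, IsMeasurableLipschitz Γ (g i)) :
    ∃ (G : Bool → X → X) (f : X → X), IsForest ∅ G f ∧
      (∀ b, IsMeasurableLipschitz Γ (G b)) ∧ IsMeasurableLipschitz Γ f := by
  have hp := IsMeasurableLipschitz.jointInverse hg hgl
  have hh := IsMeasurableLipschitz.acyclicChild hgl hp
  have hbranching := isAcyclicBranching_acyclicChild hg (jointInverse_apply hg)
  have hG := IsMeasurableLipschitz.reversedChild hh hp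
  have hf := IsMeasurableLipschitz.reversedParent hh hp
  have hR := IsMeasurableLipschitz.measurableSet_rootSet hh
  exact ⟨_, _, hbranching.isForest_reversedParent.isForest_skipping fun x hx => hx true x rfl,
    IsMeasurableLipschitz.skippingChild hR hG, IsMeasurableLipschitz.skippingParent hR (hG true) hf⟩

theorem exists_free_measurable_isSMulLipschitz (hg : Injective (uncurry g))
    (hgm : ∀ i, Measurable (g i)) (hgl : ∀ i, IsSMulLipschitz Γ (g i)) :
    ∃ b : FreeGroup Bool →* Equiv.Perm X, (∀ w, Measurable (b w)) ∧
      (∀ w ≠ 1, ∀ x, b w x ≠ x) ∧ ∀ w, IsSMulLipschitz Γ (b w) := by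
  obtain ⟨G, f, hforest, hG, hf⟩ :=
    exists_isForest_isMeasurableLipschitz hg fun i => ⟨hgm i, hgl i⟩
  have hcayley := hforest.isCayleyForest
  have hletter := IsMeasurableLipschitz.measurable_forestLetter (hG true) hf
  have hword := hcayley.isMeasurableLipschitz_wordPerm (.forestParent hG hf)
    (fun d => hletter (measurableSet_singleton d)) (.forestChild hG hf)
  exact ⟨hcayley.wordPerm, fun w => (hword w).measurable, fun w hw => hcayley.wordPerm_ne hw,
    fun w => (hword w).isSMulLipschitz⟩

end Existence

end LipschitzMaps

section TraceMeasurableSpace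

open scoped MeasureTheory

variable {X : Type*} {Y s : Set X}

/-- The σ-algebra of the sets whose trace on `Y` is measurable. -/
abbrev traceMeasurableSpace [MeasurableSpace X] (Y : Set X) : MeasurableSpace X :=
  MeasurableSpace.map ((↑) : Y → X) Subtype.instMeasurableSpace

theorem le_traceMeasurableSpace [m : MeasurableSpace X] (Y : Set X) :
    m ≤ traceMeasurableSpace Y :=
  measurable_subtype_coe.le_map

theorem measurableEq_of_le {m m' : MeasurableSpace X} (h : @MeasurableEq X m) (hle : m ≤ m') :
    @MeasurableEq X m' :=
  @MeasurableEq.mk X m' <|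
    sup_le_sup (MeasurableSpace.comap_mono hle) (MeasurableSpace.comap_mono hle) _
      (@measurableSet_diagonal X m h)

theorem measurable_traceMeasurableSpace_of_eqOn [MeasurableSpace X] {f g : X → X}
    (hg : Measurable g) (hfg : Set.EqOn f g Y) (hmaps : Set.MapsTo g Y Y) :
    Measurable[traceMeasurableSpace Y, traceMeasurableSpace Y] f := by
  intro s hs
  have hpreimage : ((↑) : Y → X) ⁻¹' (f ⁻¹' s) = hmaps.restrict ⁻¹' ((↑) ⁻¹' s) := by
    ext x
    rw [Set.mem_preimage, Set.mem_preimage, hfg x.2]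
    rfl
  change MeasurableSet (((↑) : Y → X) ⁻¹' (f ⁻¹' s))
  rw [hpreimage]
  exact (hg.comp measurable_subtype_coe).subtype_mk (h := fun x => hmaps x.2) hs

theorem measurableConstSMul_traceMeasurableSpace {Γ : Type*} [MeasurableSpace X] [SMul Γ X]
    [MeasurableConstSMul Γ X] (hY : ∀ γ : Γ, Set.MapsTo (γ • ·) Y Y) :
    @MeasurableConstSMul Γ X _ (traceMeasurableSpace Y) :=
  @MeasurableConstSMul.mk _ _ _ (traceMeasurableSpace Y) fun γ =>
    measurable_traceMeasurableSpace_of_eqOn (measurable_const_smul γ) (Set.eqOn_refl _ _) (hY γ)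

theorem baireMeasurableSet_of_traceMeasurableSpace [TopologicalSpace X] [MeasurableSpace X]
    [BorelSpace X] (hY : MeasurableSet Y) (hYres : Y ∈ residual X)
    (hs : MeasurableSet[traceMeasurableSpace Y] s) : BaireMeasurableSet s := by
  rw [← Set.inter_union_sdiff s Y]
  have hinter : MeasurableSet (s ∩ Y) := by
    rw [Set.inter_comm, ← Subtype.image_preimage_coe]
    exact hY.subtype_image hs
  refine hinter.baireMeasurableSet.union (IsMeagre.baireMeasurableSet ?_)
  have hYc : IsMeagre Yᶜ := by rwa [IsMeagre, compl_compl]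
  exact hYc.mono fun x hx => hx.2

end TraceMeasurableSpace

section FreeActions

open Function Finset
open scoped Classical MeasureTheory

variable {Γ X ι κ : Type*}

theorem injective_uncurry_comp {g : ι → X → X} {h : κ → X → X} (hg : Injective (uncurry g))
    (hh : Injective (uncurry h)) :
    Injective (uncurry fun (p : ι × κ) x => g p.1 (h p.2 x)) := by
  rintro ⟨⟨i, j⟩, x⟩ ⟨⟨i', j'⟩, x'⟩ heq
  obtain ⟨rfl, hx⟩ := Prod.ext_iff.1 (@hg (i, h j x) (i', h j' x') heq)
  obtain ⟨rfl, rfl⟩ := Prod.ext_iff.1 (@hh (j, x) (j', x') hx)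
  rfl

theorem card_mul_le_card_biUnion_orbitNeighbors [Group Γ] [MulAction Γ X] [Fintype ι]
    {g : ι → X → X} (hg : Injective (uncurry g)) {S : Finset Γ}
    (hS : ∀ i x, ∃ γ ∈ S, g i x = γ • x) (F : Finset X) :
    Fintype.card ι * #F ≤ #(F.biUnion (orbitNeighbors S)) := by
  rw [← card_univ, ← card_product, ← card_image_of_injective _ hg]
  refine card_le_card fun y hy => ?_
  obtain ⟨⟨i, x⟩, hx, rfl⟩ := mem_image.1 hy
  obtain ⟨γ, hγ, heq⟩ := hS i x
  exact mem_biUnion.2 ⟨x, (mem_product.1 hx).2, mem_image.2 ⟨γ, hγ, heq.symm⟩⟩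

theorem IsSMulLipschitz.exists_finset_forall [SMul Γ X] [Finite ι] {g : ι → X → X}
    (hg : ∀ i, IsSMulLipschitz Γ (g i)) : ∃ S : Finset Γ, ∀ i x, ∃ γ ∈ S, g i x = γ • x := by
  have := Fintype.ofFinite ι
  choose S hS using hg
  refine ⟨univ.biUnion S, fun i x => ?_⟩
  obtain ⟨γ, hγ, heq⟩ := hS i x
  exact ⟨γ, mem_biUnion.2 ⟨i, mem_univ i, hγ⟩, heq⟩

theorem IsSMulLipschitz.of_subgroup [Group Γ] [MulAction Γ X] {H : Subgroup Γ} {f : X → X}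
    (hf : IsSMulLipschitz H f) : IsSMulLipschitz Γ f := by
  obtain ⟨S, hS⟩ := hf
  refine ⟨S.image (↑), fun x => ?_⟩
  obtain ⟨γ, hγ, heq⟩ := hS x
  exact ⟨γ, mem_image_of_mem _ hγ, heq⟩

theorem exists_countable_subgroup_isSMulLipschitz [Group Γ] [MulAction Γ X] [Finite ι]
    {g : ι → X → X} (hg : ∀ i, IsSMulLipschitz Γ (g i)) :
    ∃ H : Subgroup Γ, Countable H ∧ ∀ i, IsSMulLipschitz H (g i) := by
  obtain ⟨S, hS⟩ := IsSMulLipschitz.exists_finset_forall hg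
  let ψ : FreeGroup S →* Γ := FreeGroup.lift (↑)
  refine ⟨ψ.range, (Set.countable_range ψ).to_subtype,
    fun i => ⟨univ.image fun s : S => ψ.rangeRestrict (.of s), fun x => ?_⟩⟩
  obtain ⟨γ, hγ, heq⟩ := hS i x
  refine ⟨_, mem_image_of_mem _ (mem_univ ⟨γ, hγ⟩), heq.trans ?_⟩
  rw [Subgroup.smul_def, MonoidHom.coe_rangeRestrict, FreeGroup.lift_apply_of]

section Gluing

variable [Group Γ] [MulAction Γ X] {Y : Set X} {S : Finset Γ} {φ : X → ι → X} {k : ι → X → X}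

theorem IsMatching.mapsTo (h : IsMatching (orbitNeighbors S) ∅ Y φ)
    (hY : ∀ γ : Γ, Set.MapsTo (γ • ·) Y Y) (i : ι) : Set.MapsTo (φ · i) Y Y := by
  intro x hx
  obtain ⟨γ, -, hγ⟩ := mem_image.1 (h.mem_neighbors x hx i)
  exact hγ.subst (motive := (· ∈ Y)) (hY γ hx)

theorem IsSMulLipschitz.mapsTo_compl {f : X → X} (hf : IsSMulLipschitz Γ f)
    (hY : ∀ γ : Γ, Set.MapsTo (γ • ·) Y Y) : Set.MapsTo f Yᶜ Yᶜ := by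
  intro x hx hmem
  obtain ⟨T, hT⟩ := hf
  obtain ⟨γ, -, hγ⟩ := hT x
  exact hx (inv_smul_smul γ x ▸ hγ ▸ hY γ⁻¹ hmem)

theorem IsMatching.injective_uncurry_piecewise (h : IsMatching (orbitNeighbors S) ∅ Y φ)
    (hY : ∀ γ : Γ, Set.MapsTo (γ • ·) Y Y) (hk : Injective (uncurry k))
    (hkl : ∀ i, IsSMulLipschitz Γ (k i)) :
    Injective (uncurry fun i => Y.piecewise (φ · i) (k i)) := by
  rintro ⟨i, x⟩ ⟨j, y⟩ heq
  change Y.piecewise (φ · i) (k i) x = Y.piecewise (φ · j) (k j) y at heq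
  by_cases hx : x ∈ Y <;> by_cases hy : y ∈ Y <;>
    simp only [Set.piecewise, hx, hy, if_true, if_false] at heq
  · obtain ⟨rfl, rfl⟩ := h.inj x hx y hy i j heq
    rfl
  · exact absurd (heq ▸ h.mapsTo hY i hx) ((hkl j).mapsTo_compl hY hy)
  · exact absurd (heq ▸ h.mapsTo hY j hy) ((hkl i).mapsTo_compl hY hx)
  · exact hk heq

theorem IsMatching.isSMulLipschitz_piecewise (h : IsMatching (orbitNeighbors S) ∅ Y φ)
    (i : ι) {f : X → X} (hf : IsSMulLipschitz Γ f) :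
    IsSMulLipschitz Γ (Y.piecewise (φ · i) f) := by
  obtain ⟨T, hT⟩ := hf
  refine ⟨S ∪ T, fun x => ?_⟩
  by_cases hx : x ∈ Y
  · obtain ⟨γ, hγ, heq⟩ := mem_image.1 (h.mem_neighbors x hx i)
    exact ⟨γ, mem_union_left T hγ, by rw [Set.piecewise_eq_of_mem _ _ _ hx, ← heq]⟩
  · obtain ⟨γ, hγ, heq⟩ := hT x
    exact ⟨γ, mem_union_right S hγ, by rw [Set.piecewise_eq_of_notMem _ _ _ hx, heq]⟩

end Gluing

section Baire

variable [TopologicalSpace X] [T2Space X] [SecondCountableTopology X] [BaireSpace X]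
  [MeasurableSpace X] [BorelSpace X]

theorem exists_measurable_isMatching_mem_residual [Group Γ] [Countable Γ] [MulAction Γ X]
    [MeasurableConstSMul Γ X] [Fintype ι] {S : Finset Γ}
    (hS : ∀ F : Finset X, 2 * Fintype.card ι * #F ≤ #(F.biUnion (orbitNeighbors S))) :
    ∃ (Y : Set X) (φ : X → ι → X), MeasurableSet Y ∧ Y ∈ residual X ∧
      (∀ γ : Γ, Set.MapsTo (γ • ·) Y Y) ∧ Measurable φ ∧ IsMatching (orbitNeighbors S) ∅ Y φ := by
  obtain ⟨A, hAmeas, hA, hres⟩ := exists_isSMulSeparated_seq (X := X) fun n =>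
    (insert 1 (S⁻¹ * S) ^ 2 ^ (n + 1))⁻¹ * insert 1 (S⁻¹ * S) ^ 2 ^ (n + 1)
  obtain ⟨φ, hφ, hmatch⟩ := exists_measurable_isMatching_iUnion hS hAmeas hA
  refine ⟨{x | ∀ γ : Γ, γ • x ∈ ⋃ n, A n}, φ, ?_, hres, fun γ x hx δ => ?_, hφ,
    hmatch.mono fun x hx => one_smul Γ x ▸ hx 1⟩
  · rw [Set.ofPred_forall]
    exact .iInter fun γ => measurable_const_smul γ (MeasurableSet.iUnion hAmeas)
  · exact mul_smul δ γ x ▸ hx (δ * γ)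

theorem exists_free_baireMeasurableFun [Group Γ] [Countable Γ] [MulAction Γ X]
    [MeasurableConstSMul Γ X] {k : Option Bool → X → X} (hk : Injective (uncurry k))
    (hkl : ∀ i, IsSMulLipschitz Γ (k i)) :
    ∃ b : FreeGroup Bool →* Equiv.Perm X, (∀ w, BaireMeasurableFun (b w)) ∧
      (∀ w ≠ 1, ∀ x, b w x ≠ x) ∧ ∀ w, IsSMulLipschitz Γ (b w) := by
  obtain ⟨S, hS⟩ := IsSMulLipschitz.exists_finset_forall
    (g := fun p : Option Bool × Option Bool => k p.1 ∘ k p.2) fun p => (hkl p.1).comp (hkl p.2)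
  have hexpand (F : Finset X) :
      2 * Fintype.card (Option Bool) * #F ≤ #(F.biUnion (orbitNeighbors S)) :=
    (Nat.mul_le_mul_right _ (by decide)).trans
      (card_mul_le_card_biUnion_orbitNeighbors (injective_uncurry_comp hk hk) hS F)
  obtain ⟨Y, φ, hYmeas, hYres, hY, hφ, hmatch⟩ := exists_measurable_isMatching_mem_residual hexpand
  have hφY (i : Option Bool) : Measurable[traceMeasurableSpace Y, traceMeasurableSpace Y]
      (Y.piecewise (φ · i) (k i)) :=
    measurable_traceMeasurableSpace_of_eqOn hφ.eval (Y.piecewise_eqOn _ _) (hmatch.mapsTo hY i)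
  have hmeasEq : @MeasurableEq X (traceMeasurableSpace Y) :=
    measurableEq_of_le inferInstance (le_traceMeasurableSpace Y)
  have hsmul := measurableConstSMul_traceMeasurableSpace hY
  obtain ⟨b, hb, hfree, hlip⟩ := @exists_free_measurable_isSMulLipschitz Γ X _ _ _
    (traceMeasurableSpace Y) hmeasEq hsmul _ (hmatch.injective_uncurry_piecewise hY hk hkl) hφY
    fun i => hmatch.isSMulLipschitz_piecewise i (hkl i)
  exact ⟨b, fun w s hs => baireMeasurableSet_of_traceMeasurableSpace hYmeas hYres
    (hb w (le_traceMeasurableSpace Y s hs)), hfree, hlip⟩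

end Baire

end FreeActions

section Paradoxical

open Function

variable {Γ X : Type*} [Group Γ] [MulAction Γ X]

theorem exists_injective_inv_smul {ι : Type*} {A : ι → Set X} {α : ι → Γ}
    (hA : Pairwise (Disjoint on A)) (hα : ⋃ i, α i • A i = Set.univ) :
    ∃ f : X → X, Injective f ∧ ∀ x, ∃ i, f x ∈ A i ∧ f x = (α i)⁻¹ • x := by
  have hcover (x : X) : ∃ i, (α i)⁻¹ • x ∈ A i := by
    obtain ⟨i, hi⟩ := Set.mem_iUnion.1 (hα.symm ▸ Set.mem_univ x)
    exact ⟨i, Set.mem_smul_set_iff_inv_smul_mem.1 hi⟩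
  choose i hi using hcover
  refine ⟨fun x => (α (i x))⁻¹ • x, fun x y hxy => ?_, fun x => ⟨i x, hi x, rfl⟩⟩
  have hxy : (α (i x))⁻¹ • x = (α (i y))⁻¹ • y := hxy
  have hidx : i x = i y :=
    hA.eq (Set.not_disjoint_iff.2 ⟨_, hi x, hxy ▸ hi y⟩)
  exact smul_left_cancel _ (hidx ▸ hxy)

theorem IsParadoxicalDecomposition.exists_injective_uncurry {n m : ℕ} {A : Fin n → Set X}
    {B : Fin m → Set X} {α : Fin n → Γ} {β : Fin m → Γ}
    (h : IsParadoxicalDecomposition A B α β) :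
    ∃ g : Bool → X → X, Injective (uncurry g) ∧ ∀ b, IsSMulLipschitz Γ (g b) := by
  classical
  obtain ⟨hA, hB, hAB, -, -, -, hα, hβ⟩ := h
  obtain ⟨f, hf, hfA⟩ := exists_injective_inv_smul (fun i j => hA i j) hα
  obtain ⟨g, hg, hgB⟩ := exists_injective_inv_smul (fun i j => hB i j) hβ
  have hne (x y : X) : f x ≠ g y := by
    obtain ⟨i, hi, -⟩ := hfA x
    obtain ⟨j, hj, -⟩ := hgB y
    exact (hAB i j).ne_of_mem hi hj
  refine ⟨fun b => bif b then f else g, ?_, ?_⟩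
  · rintro ⟨_ | _, x⟩ ⟨_ | _, y⟩ hxy
    · exact congrArg _ (hg hxy)
    · exact absurd hxy.symm (hne y x)
    · exact absurd hxy (hne x y)
    · exact congrArg _ (hf hxy)
  · rintro (_ | _)
    · exact .of_inv_smul fun x => (hgB x).imp fun _ => And.right
    · exact .of_inv_smul fun x => (hfA x).imp fun _ => And.right

theorem exists_option_bool_injective_uncurry {g : Bool → X → X} (hg : Injective (uncurry g))
    (hgl : ∀ b, IsSMulLipschitz Γ (g b)) :
    ∃ k : Option Bool → X → X, Injective (uncurry k) ∧ ∀ i, IsSMulLipschitz Γ (k i) := by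
  let e : Option Bool → Bool × Bool := fun i => (i.getD false, i.isNone)
  have he : Injective e := by decide
  exact ⟨fun i x => g (e i).1 (g (e i).2 x),
    (injective_uncurry_comp hg hg).comp (he.prodMap injective_id),
    fun i => (hgl _).comp (hgl _)⟩

end Paradoxical

theorem dynamical_vnd_general {Γ X : Type*} [Group Γ] [TopologicalSpace X] [T2Space X]
    [SecondCountableTopology X] [BaireSpace X] [MeasurableSpace X] [BorelSpace X] [MulAction Γ X]
    (hBorelAction : ∀ γ : Γ, Measurable (fun x : X => γ • x))
    (hpara : ∃ (n m : ℕ) (A : Fin n → Set X) (B : Fin m → Set X) (α : Fin n → Γ)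
      (β : Fin m → Γ), IsParadoxicalDecomposition A B α β) :
    ∃ b : FreeGroup (Fin 2) →* Equiv.Perm X,
      (∀ w : FreeGroup (Fin 2), BaireMeasurableFun (⇑(b w))) ∧
      (∀ w : FreeGroup (Fin 2), w ≠ 1 → ∀ x : X, b w x ≠ x) ∧
      (∀ w : FreeGroup (Fin 2), ∃ S : Finset Γ, ∀ x : X, ∃ γ ∈ S, b w x = γ • x) := by
  obtain ⟨n, m, A, B, α, β, hdecomp⟩ := hpara
  obtain ⟨g, hg, hgl⟩ := hdecomp.exists_injective_uncurry
  obtain ⟨k, hk, hkl⟩ := exists_option_bool_injective_uncurry hg hgl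
  obtain ⟨H, hH, hkH⟩ := exists_countable_subgroup_isSMulLipschitz hkl
  have hsmul : MeasurableConstSMul H X := ⟨fun γ => hBorelAction γ⟩
  obtain ⟨b, hbaire, hfree, hlip⟩ := exists_free_baireMeasurableFun hk hkH
  let e : FreeGroup (Fin 2) ≃* FreeGroup Bool := FreeGroup.freeGroupCongr finTwoEquiv
  exact ⟨b.comp e, fun w => hbaire (e w),
    fun w hw => hfree (e w) ((map_ne_one_iff e e.injective).2 hw),
    fun w => (hlip (e w)).of_subgroup⟩

/-- **Theorem (Marks–Unger).** If `a` is a nonamenable (equivalently, paradoxical) action of a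
group `Γ` on a Polish space `X` by Borel automorphisms, then there is a free `a`-Lipschitz
action of the free group `F₂` on `X` by Baire measurable automorphisms. -/
theorem dynamical_vnd {Γ X : Type*} [Group Γ] [TopologicalSpace X] [PolishSpace X]
    [MeasurableSpace X] [BorelSpace X] [MulAction Γ X]
    (hBorelAction : ∀ γ : Γ, Measurable (fun x : X => γ • x))
    (hpara : ∃ (n m : ℕ) (A : Fin n → Set X) (B : Fin m → Set X) (α : Fin n → Γ)
      (β : Fin m → Γ), IsParadoxicalDecomposition A B α β) :
    ∃ b : FreeGroup (Fin 2) →* Equiv.Perm X,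
      -- the action is by Baire measurable automorphisms
      (∀ w : FreeGroup (Fin 2), BaireMeasurableFun (⇑(b w))) ∧
      -- the action is free
      (∀ w : FreeGroup (Fin 2), w ≠ 1 → ∀ x : X, b w x ≠ x) ∧
      -- the action is `a`-Lipschitz
      (∀ w : FreeGroup (Fin 2), ∃ S : Finset Γ, ∀ x : X, ∃ γ ∈ S, b w x = γ • x) :=
  dynamical_vnd_general hBorelAction hpara
end

section
/- There exists a Polish space X, a group Γ (one may take a finitely generated free group) acting on X by Borel automorphisms, and Borel sets B₀, B₁ ⊆ X such that B₀ and B₁ are equidecomposable with respect to this action, but B₀ and B₁ are not equidecomposable using pieces having the Baire property. -/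
open scoped Pointwise

/-- `A` and `B` are equidecomposable with respect to the action of `Γ` on `X`, using pieces
satisfying the predicate `P`: there is a partition of `A` into finitely many sets `Aᵢ`
satisfying `P` and group elements `αᵢ` such that the sets `αᵢ • Aᵢ` are pairwise disjoint with
union `B`. -/
def EquidecomposableWith {Γ X : Type*} [Group Γ] [MulAction Γ X]
    (P : Set X → Prop) (A B : Set X) : Prop :=
  ∃ (n : ℕ) (C : Fin n → Set X) (α : Fin n → Γ),
    (∀ i, P (C i)) ∧
    (∀ i j, i ≠ j → Disjoint (C i) (C j)) ∧
    (⋃ i, C i) = A ∧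
    (∀ i j, i ≠ j → Disjoint (α i • C i) (α j • C j)) ∧
    (⋃ i, α i • C i) = B

/-!
The infinite dihedral group acts on `ℤ → Bool`, each reflection `sr k` reflecting the line about `k`
and flipping all bits. Two sets `A`, `B` with `γ • A = Aᶜ` and `γ • B = Bᶜ` are equidecomposable:
fix `A ∩ B` and move `A \ B` onto `B \ A` by `γ`. The set `B₀` of sequences with a `1` at `0` is
exchanged with its complement by `sr 0`, and the set `B₁` of those with a `1` at `1` by `sr 1`, so
any `M` which is exchanged with its complement by both generators yields `B₀ ∼ M ∼ B₁`. Such an `M`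
exists by the axiom of choice, since no reflection has a fixed point.

Conversely, an equidecomposition with pieces in an invariant σ-algebra makes `1_{B₀} - 1_{B₁}` a sum
of coboundaries, so that `1_{B₀} - 1_{B₁} = p + q` with `p` odd under `sr 0` and `q` odd under
`sr 1`, both measurable. Then `u = 1_{B₀} - p = 1_{B₁} + q` satisfies `u (sr 0 • x) = 1 - u x` and
`u (sr 1 • x) = 1 - u x`, whence `{1 ≤ u}` is a measurable `M` as above. But no such `M` has the
Baire property: it agrees with an open `U` up to a meager set, and a reflection about a far away
point maps `U` onto a set meeting `U`.
-/

section Complement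

variable {Γ X : Type*} [Group Γ] [MulAction Γ X] {γ : Γ} {A B : Set X}

theorem smul_set_eq_compl_iff : γ • A = Aᶜ ↔ ∀ x, γ • x ∈ A ↔ x ∉ A := by
  rw [eq_compl_comm, Set.ext_iff, ← (MulAction.toPerm γ).forall_congr_right]
  simp

theorem inv_smul_set_eq_compl (h : γ • A = Aᶜ) : γ⁻¹ • A = Aᶜ := by
  rw [inv_smul_eq_iff, Set.smul_set_compl, h, compl_compl]

theorem indicator_one_smul_of_smul_set_eq_compl {R : Type*} [AddGroupWithOne R] (h : γ • A = Aᶜ)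
    (x : X) : A.indicator (1 : X → R) (γ • x) = 1 - A.indicator 1 x := by
  have := smul_set_eq_compl_iff.1 h x
  by_cases hx : x ∈ A <;> simp_all

open scoped Classical in
theorem exists_equidecomp_of_smul_set_eq_compl (hA : γ • A = Aᶜ) (hB : γ • B = Bᶜ) :
    ∃ f : Equidecomp X Γ, f.source = A ∧ f.target = B := by
  have hA' := smul_set_eq_compl_iff.1 hA
  have hB' := smul_set_eq_compl_iff.1 hB
  have hA_inv := smul_set_eq_compl_iff.1 (inv_smul_set_eq_compl hA)
  have hB_inv := smul_set_eq_compl_iff.1 (inv_smul_set_eq_compl hB)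
  refine ⟨{
    toFun := fun x ↦ if x ∈ B then x else γ • x
    invFun := fun x ↦ if x ∈ A then x else γ⁻¹ • x
    source := A
    target := B
    map_source' := fun x _ ↦ ?_
    map_target' := fun x _ ↦ ?_
    left_inv' := fun x _ ↦ ?_
    right_inv' := fun x _ ↦ ?_
    isDecompOn' := ⟨{1, γ}, fun x _ ↦ ?_⟩ }, rfl, rfl⟩
  · grind
  · grind
  · by_cases hxB : x ∈ B <;> simp [*]
  · by_cases hxA : x ∈ A <;> simp [*]
  · by_cases hxB : x ∈ B <;> simp [*]

end Complement

section Equidecomposable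

variable {Γ X : Type*} [Group Γ] [MulAction Γ X]

theorem EquidecomposableWith.of_equidecomp (f : Equidecomp X Γ) :
    EquidecomposableWith (Γ := Γ) (fun _ ↦ True) f.source f.target := by
  choose! g hg hfg using f.isDecompOn
  let e := f.witness.equivFin
  let C (i : Fin f.witness.card) : Set X := {x ∈ f.source | g x = e.symm i}
  have smul_C (i) : (e.symm i : Γ) • C i = f '' C i :=
    Set.image_congr fun x hx ↦ by rw [hfg x hx.1, hx.2]
  have disjoint_C (i j) (hij : i ≠ j) : Disjoint (C i) (C j) :=
    Set.disjoint_left.2 fun x hi hj ↦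
      hij (e.symm.injective (Subtype.ext (hi.2.symm.trans hj.2)))
  have iUnion_C : ⋃ i, C i = f.source := by
    refine Set.Subset.antisymm (Set.iUnion_subset fun i x hx ↦ hx.1) fun x hx ↦ ?_
    exact Set.mem_iUnion.2 ⟨e ⟨g x, hg x hx⟩, hx, by simp⟩
  refine ⟨_, C, fun i ↦ e.symm i, fun _ ↦ trivial, disjoint_C, iUnion_C, fun i j hij ↦ ?_, ?_⟩
  · rw [smul_C, smul_C]
    exact (disjoint_C i j hij).image f.injOn (fun _ hx ↦ hx.1) fun _ hx ↦ hx.1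
  · simp_rw [smul_C, ← Set.image_iUnion, iUnion_C]
    exact f.image_source_eq_target

theorem EquidecomposableWith.of_smul_set_eq_compl {σ τ : Γ} {A B M : Set X} (hA : σ • A = Aᶜ)
    (hB : τ • B = Bᶜ) (hσ : σ • M = Mᶜ) (hτ : τ • M = Mᶜ) :
    EquidecomposableWith (Γ := Γ) (fun _ ↦ True) A B := by
  obtain ⟨f, rfl, hf⟩ := exists_equidecomp_of_smul_set_eq_compl hA hσ
  obtain ⟨g, hg, rfl⟩ := exists_equidecomp_of_smul_set_eq_compl hτ hB
  have hsource : (f.trans g).source = f.source := by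
    rw [Equidecomp.trans_toPartialEquiv, PartialEquiv.trans_source'', hg, ← hf, Set.inter_self,
      PartialEquiv.symm_image_target_eq_source]
  have htarget : (f.trans g).target = g.target := by
    rw [Equidecomp.trans_toPartialEquiv, PartialEquiv.trans_target'', hf, ← hg, Set.inter_self,
      PartialEquiv.image_source_eq_target]
  rw [← hsource, ← htarget]
  exact of_equidecomp (f.trans g)

theorem exists_smul_eq_mul {H : Type*} [Group H] (ε : Γ →* H)
    (hε : ∀ x : X, MulAction.stabilizer Γ x ≤ ε.ker) :
    ∃ s : X → H, ∀ (γ : Γ) (x : X), s (γ • x) = ε γ * s x := by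
  let _ : Setoid X := MulAction.orbitRel Γ X
  let rep (x : X) : X := (Quotient.mk (MulAction.orbitRel Γ X) x).out
  have rep_smul (γ : Γ) (x : X) : rep (γ • x) = rep x :=
    congrArg Quotient.out (Quotient.sound (MulAction.mem_orbit x γ))
  have exists_smul_rep (x : X) : ∃ γ : Γ, γ • rep x = x :=
    MulAction.orbitRel_apply.1 (Setoid.symm (Quotient.mk_out x))
  choose g hg using exists_smul_rep
  refine ⟨fun x ↦ ε (g x), fun γ x ↦ ?_⟩
  have hstab : (g (γ • x))⁻¹ * (γ * g x) ∈ MulAction.stabilizer Γ (rep x) := by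
    rw [MulAction.mem_stabilizer_iff, mul_smul, mul_smul, hg, inv_smul_eq_iff, ← rep_smul γ x, hg]
  have := hε _ hstab
  rwa [MonoidHom.mem_ker, map_mul, map_inv, inv_mul_eq_one, map_mul] at this

theorem exists_forall_smul_set_eq_compl (ε : Γ →* ℤˣ)
    (hε : ∀ x : X, MulAction.stabilizer Γ x ≤ ε.ker) :
    ∃ M : Set X, ∀ γ : Γ, ε γ = -1 → γ • M = Mᶜ := by
  obtain ⟨s, hs⟩ := exists_smul_eq_mul ε hε
  refine ⟨s ⁻¹' {1}, fun γ hγ ↦ smul_set_eq_compl_iff.2 fun x ↦ ?_⟩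
  rcases Int.units_eq_one_or (s x) with hx | hx <;> simp [hs, hγ, hx]

end Equidecomposable

section Measurable

variable {Γ X : Type*} [Group Γ] [MulAction Γ X] [MeasurableSpace X]

variable (E : Type*) [AddCommGroup E] [MeasurableSpace E] [MeasurableAdd₂ E] [MeasurableNeg E]

/-- The group of measurable functions which are odd under `γ`, that is, which change sign when
precomposed with `γ`. When `γ` is an involution, these include the coboundaries of `γ`. -/
def oddMeasurable (γ : Γ) : AddSubgroup (X → E) where
  carrier := {p | Measurable p ∧ ∀ x, p (γ • x) = -p x}
  zero_mem' := ⟨measurable_zero, by simp⟩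
  add_mem' := fun hp hq ↦ ⟨hp.1.add hq.1, fun x ↦ by simp [hp.2, hq.2, add_comm]⟩
  neg_mem' := fun hp ↦ ⟨hp.1.neg, fun x ↦ by simp [hp.2]⟩

variable {E} [MeasurableConstSMul Γ X]

theorem sub_comp_smul_mem_oddMeasurable {γ : Γ} (hγ : γ * γ = 1) {f : X → E} (hf : Measurable f) :
    (fun x ↦ f x - f (γ • x)) ∈ oddMeasurable E γ := by
  refine ⟨?_, fun x ↦ by simp [smul_smul, hγ]⟩
  simp only [sub_eq_add_neg]
  exact hf.add (hf.comp (measurable_const_smul γ)).neg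

theorem sub_comp_smul_mem_iSup_oddMeasurable {S : Set Γ} (hS : ∀ s ∈ S, s * s = 1) {γ : Γ}
    (hγ : γ ∈ Subgroup.closure S) {f : X → E} (hf : Measurable f) :
    (fun x ↦ f x - f (γ • x)) ∈ ⨆ s ∈ S, oddMeasurable (X := X) E s := by
  induction hγ using Subgroup.closure_induction generalizing f with
  | mem s hs =>
    exact AddSubgroup.mem_iSup_of_mem s <| AddSubgroup.mem_iSup_of_mem hs <|
      sub_comp_smul_mem_oddMeasurable (hS s hs) hf
  | one => simp [← Pi.zero_def]
  | mul a b _ _ ha hb =>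
    convert add_mem (ha hf) (hb (hf.comp (measurable_const_smul a))) using 1
    ext x
    simp [mul_smul]
  | inv a _ ha =>
    convert neg_mem (ha (hf.comp (measurable_const_smul a⁻¹))) using 1
    ext x
    simp

theorem EquidecomposableWith.indicator_sub_indicator_mem_iSup_oddMeasurable {S : Set Γ}
    (hS : ∀ s ∈ S, s * s = 1) (hS_closure : Subgroup.closure S = ⊤) {A B : Set X}
    (h : EquidecomposableWith (Γ := Γ) MeasurableSet A B) :
    A.indicator 1 - B.indicator 1 ∈ ⨆ s ∈ S, oddMeasurable (X := X) ℤ s := by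
  obtain ⟨n, C, α, hC, hdisj, rfl, hdisj_smul, rfl⟩ := h
  have indicator_iUnion (D : Fin n → Set X) (hD : ∀ i j, i ≠ j → Disjoint (D i) (D j)) :
      (⋃ i, D i).indicator (1 : X → ℤ) = ∑ i, (D i).indicator 1 := by
    ext x
    simpa using Finset.indicator_biUnion_apply Finset.univ D (fun i _ j _ ↦ hD i j) x
  rw [indicator_iUnion C hdisj, indicator_iUnion _ hdisj_smul, ← Finset.sum_sub_distrib]
  refine sum_mem fun i _ ↦ ?_
  have indicator_smul : (α i • C i).indicator (1 : X → ℤ) =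
      fun x ↦ (C i).indicator 1 ((α i)⁻¹ • x) := by
    rw [← Set.preimage_smul_inv]
    rfl
  rw [indicator_smul]
  exact sub_comp_smul_mem_iSup_oddMeasurable hS (by simp [hS_closure])
    (measurable_one.indicator (hC i))

theorem EquidecomposableWith.exists_measurableSet_smul_set_eq_compl {σ τ : Γ} (hσ : σ * σ = 1)
    (hτ : τ * τ = 1) (hστ : Subgroup.closure {σ, τ} = ⊤) {A B : Set X} (hA : σ • A = Aᶜ)
    (hB : τ • B = Bᶜ) (hA_meas : MeasurableSet A)
    (h : EquidecomposableWith (Γ := Γ) MeasurableSet A B) :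
    ∃ M : Set X, MeasurableSet M ∧ σ • M = Mᶜ ∧ τ • M = Mᶜ := by
  have hmem := h.indicator_sub_indicator_mem_iSup_oddMeasurable (by simp [hσ, hτ]) hστ
  rw [iSup_pair, AddSubgroup.mem_sup] at hmem
  obtain ⟨p, ⟨hp_meas, hp⟩, q, ⟨-, hq⟩, hpq⟩ := hmem
  let u (x : X) : ℤ := A.indicator 1 x - p x
  have hu_meas : Measurable u := (measurable_one.indicator hA_meas).sub hp_meas
  have hu_eq (x : X) : u x = B.indicator 1 x + q x := by
    have := congrFun hpq x
    simp only [Pi.add_apply, Pi.sub_apply] at this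
    grind
  have hu_σ (x : X) : u (σ • x) = 1 - u x := by
    simp only [u, indicator_one_smul_of_smul_set_eq_compl hA, hp]
    ring
  have hu_τ (x : X) : u (τ • x) = 1 - u x := by
    rw [hu_eq, hu_eq, indicator_one_smul_of_smul_set_eq_compl hB, hq]
    ring
  refine ⟨u ⁻¹' Set.Ici 1, hu_meas measurableSet_Ici, ?_, ?_⟩ <;>
    refine smul_set_eq_compl_iff.2 fun x ↦ ?_
  · simp only [Set.mem_preimage, Set.mem_Ici, hu_σ]
    lia
  · simp only [Set.mem_preimage, Set.mem_Ici, hu_τ]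
    lia

end Measurable

section Baire

open Topology

variable {Γ X : Type*} [Group Γ] [MulAction Γ X] [TopologicalSpace X] [ContinuousConstSMul Γ X]

theorem tendsto_smul_residual (γ : Γ) : Filter.Tendsto (γ • · : X → X) (residual X) (residual X) :=
  tendsto_residual_of_isOpenMap (continuous_const_smul γ) (isOpenMap_smul γ)

theorem EquidecomposableWith.exists_baireMeasurableSet_smul_set_eq_compl {σ τ : Γ}
    (hσ : σ * σ = 1) (hτ : τ * τ = 1) (hστ : Subgroup.closure {σ, τ} = ⊤) {A B : Set X}
    (hA : σ • A = Aᶜ) (hB : τ • B = Bᶜ) (hA_meas : BaireMeasurableSet A)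
    (h : EquidecomposableWith (Γ := Γ) (fun s ↦ BaireMeasurableSet s) A B) :
    ∃ M : Set X, BaireMeasurableSet M ∧ σ • M = Mᶜ ∧ τ • M = Mᶜ := by
  let _ : MeasurableSpace X := eventuallyMeasurableSpace (borel X) (residual X)
  have : MeasurableConstSMul Γ X :=
    ⟨fun γ _ hs ↦ BaireMeasurableSet.preimage (continuous_const_smul γ) (isOpenMap_smul γ) hs⟩
  exact h.exists_measurableSet_smul_set_eq_compl hσ hτ hστ hA hB hA_meas

theorem eq_empty_of_isOpen_of_residualEq_empty [BaireSpace X] {U : Set X} (hU : IsOpen U)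
    (h : U =ᵇ (∅ : Set X)) : U = ∅ := by
  by_contra! hne
  exact not_isMeagre_of_isOpen hU hne (Filter.eventuallyEq_empty.1 h)

theorem not_baireMeasurableSet_of_forall_isOpen_exists_smul [BaireSpace X] [Nonempty X] {M : Set X}
    (h : ∀ U : Set X, IsOpen U → U.Nonempty → ∃ γ : Γ, γ • M = Mᶜ ∧ (U ∩ γ • U).Nonempty) :
    ¬ BaireMeasurableSet M := by
  intro hM
  obtain ⟨U, hU, hMU⟩ := hM.residualEq_isOpen
  have smul_residualEq (γ : Γ) : (γ • M : Set X) =ᵇ (γ • U : Set X) := by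
    rw [← Set.preimage_smul_inv, ← Set.preimage_smul_inv]
    exact hMU.comp_tendsto (tendsto_smul_residual γ⁻¹)
  have U_nonempty : U.Nonempty := by
    by_contra! hU_empty
    obtain ⟨γ, hγ, -⟩ := h Set.univ isOpen_univ Set.univ_nonempty
    have := hMU.union (smul_residualEq γ)
    rw [hγ, hU_empty, Set.union_compl_self, Set.smul_set_empty, Set.union_self] at this
    exact Set.univ_nonempty.ne_empty (eq_empty_of_isOpen_of_residualEq_empty isOpen_univ this)
  obtain ⟨γ, hγ, hUγ⟩ := h U hU U_nonempty
  refine hUγ.ne_empty (eq_empty_of_isOpen_of_residualEq_empty (hU.inter (hU.smul γ)) ?_)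
  simpa only [hγ, Set.inter_compl_self] using (hMU.inter (smul_residualEq γ)).symm

end Baire

section Dihedral

open DihedralGroup

theorem closure_sr_zero_sr_one (n : ℕ) :
    Subgroup.closure {sr 0, sr 1} = (⊤ : Subgroup (DihedralGroup n)) := by
  refine Subgroup.eq_top_iff' _ |>.2 fun γ ↦ ?_
  have h0 : sr 0 ∈ Subgroup.closure {sr 0, sr (1 : ZMod n)} := Subgroup.subset_closure (by simp)
  have h1 : sr 1 ∈ Subgroup.closure {sr 0, sr (1 : ZMod n)} := Subgroup.subset_closure (by simp)
  have hr (i : ZMod n) : r i ∈ Subgroup.closure {sr 0, sr (1 : ZMod n)} := by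
    obtain ⟨k, rfl⟩ := ZMod.intCast_surjective i
    simpa using zpow_mem (mul_mem h0 h1) k
  rcases γ with i | i
  · exact hr i
  · simpa using mul_mem h0 (hr i)

theorem sr_smul_set_eq_compl {n : ℕ} {X : Type*} [MulAction (DihedralGroup n) X] {M : Set X}
    (h0 : (sr 0 : DihedralGroup n) • M = Mᶜ) (h1 : (sr 1 : DihedralGroup n) • M = Mᶜ)
    (i : ZMod n) : sr i • M = Mᶜ := by
  obtain ⟨k, rfl⟩ := ZMod.intCast_surjective i
  have hr : (r 1 : DihedralGroup n) ∈ MulAction.stabilizer (DihedralGroup n) M := by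
    have : (r 1 : DihedralGroup n) = sr 0 * sr 1 := by simp
    rw [MulAction.mem_stabilizer_iff, this, mul_smul, h1, Set.smul_set_compl, h0, compl_compl]
  have hsr : (sr (k : ZMod n)) = sr 0 * r 1 ^ k := by simp
  rw [hsr, mul_smul, MulAction.mem_stabilizer_iff.1 (zpow_mem hr k), h0]

/-- The character of the dihedral group which is `1` on rotations and `-1` on reflections. -/
def dihedralSign (n : ℕ) : DihedralGroup n →* ℤˣ where
  toFun
    | r _ => 1
    | sr _ => -1
  map_one' := rfl
  map_mul' := by rintro (i | i) (j | j) <;> rfl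

/-- The Cantor space `ℤ → Bool` of two-sided binary sequences, on which the infinite dihedral group
acts: `sr k` reflects the line about `k` and flips all bits, so that `r k` shifts by `2 * k`. -/
def DihedralCantor : Type := ZMod 0 → Bool

namespace DihedralCantor

instance : TopologicalSpace DihedralCantor := inferInstanceAs (TopologicalSpace (ℤ → Bool))

instance : PolishSpace DihedralCantor :=
  let _ := TopologicalSpace.metrizableSpaceMetric (ℤ → Bool)
  inferInstanceAs (PolishSpace (ℤ → Bool))

instance : Nonempty DihedralCantor := inferInstanceAs (Nonempty (ℤ → Bool))

instance : MulAction (DihedralGroup 0) DihedralCantor where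
  smul
    | r k, x => fun i ↦ x (i + 2 * k)
    | sr k, x => fun i ↦ !x (2 * k - i)
  one_smul x := funext fun i ↦ congrArg x (by simp)
  mul_smul := by
    rintro (j | j) (k | k) x <;> funext i
    · exact congrArg x (by ring)
    · exact congrArg (!x ·) (by ring)
    · exact congrArg (!x ·) (by ring)
    · exact (congrArg x (by ring)).trans (Bool.not_not _).symm

theorem sr_smul_apply (k : ZMod 0) (x : DihedralCantor) (i : ZMod 0) :
    (sr k • x) i = !x (2 * k - i) := rfl

instance : ContinuousConstSMul (DihedralGroup 0) DihedralCantor where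
  continuous_const_smul := by
    rintro (k | k)
    · exact continuous_pi fun i ↦ continuous_apply (i + 2 * k)
    · exact continuous_pi fun i ↦ (continuous_of_discreteTopology (f := Bool.not)).comp
        (continuous_apply (2 * k - i))

theorem stabilizer_le_ker_dihedralSign (x : DihedralCantor) :
    MulAction.stabilizer (DihedralGroup 0) x ≤ (dihedralSign 0).ker := by
  rintro (k | k) hk
  · rfl
  · have : (sr k • x) k = x k := by rw [MulAction.mem_stabilizer_iff.1 hk]
    simp [sr_smul_apply, two_mul] at this

/-- The clopen set of sequences with a `1` at position `k`. -/
def oneAt (k : ZMod 0) : Set DihedralCantor := {x | x k = true}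

theorem isOpen_oneAt (k : ZMod 0) : IsOpen (oneAt k) :=
  (isOpen_discrete {true}).preimage (continuous_apply (A := fun _ : ZMod 0 ↦ Bool) k)

theorem sr_smul_oneAt (k : ZMod 0) : sr k • oneAt k = (oneAt k)ᶜ :=
  smul_set_eq_compl_iff.2 fun x ↦ by simp [oneAt, sr_smul_apply, two_mul]

theorem exists_inter_sr_smul_nonempty {U : Set DihedralCantor} (hU : IsOpen U)
    (hU_ne : U.Nonempty) : ∃ k : ZMod 0, (U ∩ sr k • U).Nonempty := by
  obtain ⟨u, hu⟩ := hU_ne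
  obtain ⟨F, V, hV, hVU⟩ := isOpen_pi_iff.1 hU u hu
  have mem_U {x : DihedralCantor} (hx : ∀ i ∈ F, x i = u i) : x ∈ U :=
    hVU fun i hi ↦ hx i hi ▸ (hV i hi).2
  obtain ⟨k, hk⟩ : ∃ k : ZMod 0, ∀ i ∈ F, 2 * k - i ∉ F := by
    classical
    obtain ⟨k, hk⟩ := ((F + F).finite_toSet.preimage
      (mul_right_injective₀ (two_ne_zero (α := ZMod 0))).injOn).exists_notMem
    refine ⟨k, fun i hi hki ↦ hk ?_⟩
    simpa using Set.add_mem_add hki hi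
  classical
  let x : DihedralCantor := fun i ↦ if i ∈ F then u i else !u (2 * k - i)
  refine ⟨k, x, mem_U fun i hi ↦ if_pos hi, ?_⟩
  rw [Set.mem_smul_set_iff_inv_smul_mem, inv_sr]
  exact mem_U fun i hi ↦ by rw [sr_smul_apply]; simp [x, hk i hi]

theorem not_baireMeasurableSet {M : Set DihedralCantor}
    (h0 : (sr 0 : DihedralGroup 0) • M = Mᶜ) (h1 : (sr 1 : DihedralGroup 0) • M = Mᶜ) :
    ¬ BaireMeasurableSet M :=
  not_baireMeasurableSet_of_forall_isOpen_exists_smul fun _ hU hU_ne ↦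
    (exists_inter_sr_smul_nonempty hU hU_ne).imp' sr fun k hk ↦ ⟨sr_smul_set_eq_compl h0 h1 k, hk⟩

end DihedralCantor

end Dihedral

/-- **Theorem (Marks–Unger).** There is a group acting on a Polish space by Borel automorphisms
and two Borel sets which are equidecomposable with respect to this action, but not
equidecomposable using pieces having the Baire property. -/
theorem exists_equidecomposable_not_baire_equidecomposable :
    ∃ (X : Type) (_ : TopologicalSpace X) (_ : PolishSpace X)
      (_ : MeasurableSpace X) (_ : BorelSpace X)
      (Γ : Type) (_ : Group Γ) (_ : MulAction Γ X),
      (∀ γ : Γ, Measurable (fun x : X => γ • x)) ∧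
      ∃ B₀ B₁ : Set X,
        MeasurableSet B₀ ∧ MeasurableSet B₁ ∧
        EquidecomposableWith (Γ := Γ) (fun _ => True) B₀ B₁ ∧
        ¬ EquidecomposableWith (Γ := Γ) (fun s => BaireMeasurableSet s) B₀ B₁ := by
  let _ : MeasurableSpace DihedralCantor := borel DihedralCantor
  have : BorelSpace DihedralCantor := ⟨rfl⟩
  obtain ⟨M, hM⟩ := exists_forall_smul_set_eq_compl (dihedralSign 0)
    DihedralCantor.stabilizer_le_ker_dihedralSign
  refine ⟨DihedralCantor, inferInstance, inferInstance, inferInstance, inferInstance,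
    DihedralGroup 0, inferInstance, inferInstance,
    fun γ ↦ (continuous_const_smul γ).measurable, DihedralCantor.oneAt 0, DihedralCantor.oneAt 1,
    (DihedralCantor.isOpen_oneAt 0).measurableSet, (DihedralCantor.isOpen_oneAt 1).measurableSet,
    ?_, fun h ↦ ?_⟩
  · exact .of_smul_set_eq_compl (DihedralCantor.sr_smul_oneAt 0) (DihedralCantor.sr_smul_oneAt 1)
      (hM _ rfl) (hM _ rfl)
  · obtain ⟨N, hN, hN0, hN1⟩ := h.exists_baireMeasurableSet_smul_set_eq_compl
      (DihedralGroup.sr_mul_self 0) (DihedralGroup.sr_mul_self 1) (closure_sr_zero_sr_one 0)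
      (DihedralCantor.sr_smul_oneAt 0) (DihedralCantor.sr_smul_oneAt 1)
      (DihedralCantor.isOpen_oneAt 0).baireMeasurableSet
    exact DihedralCantor.not_baireMeasurableSet hN0 hN1 hN
end
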